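/- arXiv:1801.02357 — 2 statements merged into one kernel-verified Lean document; each statement's English description precedes it below -/
import Mathlib

section
/- For every nonzero triple (c₁,c₂,c₃) ∈ ℝ³, the second-variation form of the fundamental Scherk surface satisfies Q(c₁φ¹ + c₂φ² + c₃φ³) < 0. Consequently φ¹, φ², φ³ span a 3-dimensional subspace of the space of smooth functions on Ω₀ with bounded partial derivatives of order ≤ 2 on which Q is negative definite, so the modified index of the fundamental Scherk surface is at least 3. -/
noncomputable section
open MeasureTheory Real

/-- Dot product on `ℝ³ = ℝ × ℝ × ℝ`. -/
def dot3 (a b : ℝ × ℝ × ℝ) : ℝ := a.1 * b.1 + a.2.1 * b.2.1 + a.2.2 * b.2.2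

/-- Cross product on `ℝ³ = ℝ × ℝ × ℝ`. -/
def cross3 (a b : ℝ × ℝ × ℝ) : ℝ × ℝ × ℝ :=
  (a.2.1 * b.2.2 - a.2.2 * b.2.1, a.2.2 * b.1 - a.1 * b.2.2, a.1 * b.2.1 - a.2.1 * b.1)

/-- Euclidean norm on `ℝ³ = ℝ × ℝ × ℝ`. -/
def norm3 (a : ℝ × ℝ × ℝ) : ℝ := Real.sqrt (dot3 a a)

/-- Partial derivative in the first (`u`) variable. -/
def pdU {E : Type*} [NormedAddCommGroup E] [NormedSpace ℝ E] (f : ℝ × ℝ → E) (p : ℝ × ℝ) : E :=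
  deriv (fun x => f (x, p.2)) p.1

/-- Partial derivative in the second (`v`) variable. -/
def pdV {E : Type*} [NormedAddCommGroup E] [NormedSpace ℝ E] (f : ℝ × ℝ → E) (p : ℝ × ℝ) : E :=
  deriv (fun y => f (p.1, y)) p.2

/-- The fundamental domain `Ω₀ = (-1,1) × (-1,1)`. -/
def Ω₀ : Set (ℝ × ℝ) := Set.Ioo (-1 : ℝ) 1 ×ˢ Set.Ioo (-1 : ℝ) 1

/-- The fundamental Scherk parametrization. -/
def scherk (p : ℝ × ℝ) : ℝ × ℝ × ℝ :=
  (arctan (2 * p.1 / (p.1 ^ 2 + p.2 ^ 2 - 1)),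
   arctan (-2 * p.2 / (p.1 ^ 2 + p.2 ^ 2 - 1)),
   (1 / 2) * Real.log (((p.1 ^ 2 - p.2 ^ 2 + 1) ^ 2 + 4 * p.1 ^ 2 * p.2 ^ 2) /
     ((p.1 ^ 2 - p.2 ^ 2 - 1) ^ 2 + 4 * p.1 ^ 2 * p.2 ^ 2)))

def σu : ℝ × ℝ → ℝ × ℝ × ℝ := pdU scherk
def σv : ℝ × ℝ → ℝ × ℝ × ℝ := pdV scherk
def σuu : ℝ × ℝ → ℝ × ℝ × ℝ := pdU σu
def σuv : ℝ × ℝ → ℝ × ℝ × ℝ := pdV σu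
def σvv : ℝ × ℝ → ℝ × ℝ × ℝ := pdV σv

/-- First fundamental form. -/
def g11 (p : ℝ × ℝ) : ℝ := dot3 (σu p) (σu p)
def g12 (p : ℝ × ℝ) : ℝ := dot3 (σu p) (σv p)
def g22 (p : ℝ × ℝ) : ℝ := dot3 (σv p) (σv p)

def detg (p : ℝ × ℝ) : ℝ := g11 p * g22 p - g12 p ^ 2

/-- Components of the inverse metric `(gⁱʲ)`. -/
def ginv11 (p : ℝ × ℝ) : ℝ := g22 p / detg p
def ginv12 (p : ℝ × ℝ) : ℝ := -g12 p / detg p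
def ginv22 (p : ℝ × ℝ) : ℝ := g11 p / detg p

/-- Unit normal `N = (σ_u × σ_v)/‖σ_u × σ_v‖`. -/
def NS (p : ℝ × ℝ) : ℝ × ℝ × ℝ :=
  (norm3 (cross3 (σu p) (σv p)))⁻¹ • cross3 (σu p) (σv p)

/-- Second fundamental form. -/
def h11 (p : ℝ × ℝ) : ℝ := dot3 (σuu p) (NS p)
def h12 (p : ℝ × ℝ) : ℝ := dot3 (σuv p) (NS p)
def h22 (p : ℝ × ℝ) : ℝ := dot3 (σvv p) (NS p)

/-- Gaussian curvature. -/
def κ (p : ℝ × ℝ) : ℝ := (h11 p * h22 p - h12 p ^ 2) / detg p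

/-- The second-variation quadratic form of the fundamental Scherk surface. -/
def Q (φ : ℝ × ℝ → ℝ) : ℝ :=
  ∫ p in Ω₀,
    (ginv11 p * pdU φ p ^ 2 + 2 * ginv12 p * pdU φ p * pdV φ p + ginv22 p * pdV φ p ^ 2
      + 2 * κ p * φ p ^ 2) * Real.sqrt (detg p)

/-- The polarized second-variation bilinear form. -/
def B (φ ψ : ℝ × ℝ → ℝ) : ℝ :=
  ∫ p in Ω₀,
    (ginv11 p * pdU φ p * pdU ψ p + ginv12 p * pdU φ p * pdV ψ p
      + ginv12 p * pdV φ p * pdU ψ p + ginv22 p * pdV φ p * pdV ψ p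
      + 2 * κ p * φ p * ψ p) * Real.sqrt (detg p)

/-- The test functions `φ¹, φ², φ³`. -/
def Φ : Fin 3 → (ℝ × ℝ → ℝ) :=
  ![fun p => (p.1 * p.2) ^ 2 + 2,
    fun p => p.1 - p.1 ^ 5 / 4,
    fun p => p.2 - p.2 ^ 5 / 4]

/-- Membership in `F(Ω₀)`: smooth on `Ω₀` with all partial derivatives of order `≤ 2`
bounded on `Ω₀`. -/
def memF (f : ℝ × ℝ → ℝ) : Prop :=
  ContDiffOn ℝ (⊤ : ℕ∞) f Ω₀ ∧
    ∀ i : ℕ, i ≤ 2 → ∃ C : ℝ, ∀ p ∈ Ω₀, ‖iteratedFDerivWithin ℝ i f Ω₀ p‖ ≤ C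

/-- The modified index `ind_b` of the fundamental Scherk surface: the supremum of the
dimensions of finite-dimensional subspaces of `F(Ω₀)` on which the second-variation
form `Q` is negative definite. -/
def indbScherk : ℕ∞ :=
  sSup {d : ℕ∞ | ∃ V : Submodule ℝ (ℝ × ℝ → ℝ), FiniteDimensional ℝ V ∧
    (∀ f ∈ V, memF f) ∧ (∀ f ∈ V, f ≠ 0 → Q f < 0) ∧ d = (Module.finrank ℝ V : ℕ∞)}

/-- `|z² + 1|²` for `z = u + iv`. -/
def sqAdd (p : ℝ × ℝ) : ℝ := (p.1 ^ 2 - p.2 ^ 2 + 1) ^ 2 + 4 * p.1 ^ 2 * p.2 ^ 2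

/-- `|z² - 1|²` for `z = u + iv`. -/
def sqSub (p : ℝ × ℝ) : ℝ := (p.1 ^ 2 - p.2 ^ 2 - 1) ^ 2 + 4 * p.1 ^ 2 * p.2 ^ 2

theorem sqAdd_pos {p : ℝ × ℝ} (hp : p.1 ^ 2 + p.2 ^ 2 - 1 ≠ 0) : 0 < sqAdd p := by
  have : sqAdd p = (p.1 ^ 2 + p.2 ^ 2 - 1) ^ 2 + 4 * p.1 ^ 2 := by unfold sqAdd; ring
  rw [this]; positivity

theorem sqSub_pos {p : ℝ × ℝ} (hp : p.1 ^ 2 + p.2 ^ 2 - 1 ≠ 0) : 0 < sqSub p := by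
  have : sqSub p = (p.1 ^ 2 + p.2 ^ 2 - 1) ^ 2 + 4 * p.2 ^ 2 := by unfold sqSub; ring
  rw [this]; positivity

/-- Off the unit circle, `σ_u` in closed form. -/
def scherkU (p : ℝ × ℝ) : ℝ × ℝ × ℝ :=
  (-2 * (1 + p.1 ^ 2 - p.2 ^ 2) / sqAdd p, 4 * p.1 * p.2 / sqSub p,
    2 * p.1 * (p.1 ^ 2 + p.2 ^ 2 + 1) / sqAdd p - 2 * p.1 * (p.1 ^ 2 + p.2 ^ 2 - 1) / sqSub p)

/-- Off the unit circle, `σ_v` in closed form. -/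
def scherkV (p : ℝ × ℝ) : ℝ × ℝ × ℝ :=
  (-4 * p.1 * p.2 / sqAdd p, -2 * (p.1 ^ 2 - p.2 ^ 2 - 1) / sqSub p,
    2 * p.2 * (p.1 ^ 2 + p.2 ^ 2 - 1) / sqAdd p - 2 * p.2 * (p.1 ^ 2 + p.2 ^ 2 + 1) / sqSub p)

theorem hasDerivAt_arctan_div {f g : ℝ → ℝ} {f' g' x : ℝ} (hf : HasDerivAt f f' x)
    (hg : HasDerivAt g g' x) (h0 : g x ≠ 0) :
    HasDerivAt (fun t => arctan (f t / g t)) ((f' * g x - f x * g') / (g x ^ 2 + f x ^ 2)) x := by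
  refine (hf.div hg h0).arctan.congr_deriv ?_
  simp only [Pi.div_apply]
  have : 0 < g x ^ 2 + f x ^ 2 := by positivity
  field_simp

theorem hasDerivAt_log_div {f g : ℝ → ℝ} {f' g' x : ℝ} (hf : HasDerivAt f f' x)
    (hg : HasDerivAt g g' x) (hf0 : f x ≠ 0) (hg0 : g x ≠ 0) :
    HasDerivAt (fun t => (1 / 2) * Real.log (f t / g t)) (f' / f x / 2 - g' / g x / 2) x := by
  refine (((hf.div hg hg0).log (div_ne_zero hf0 hg0)).const_mul (1 / 2 : ℝ)).congr_deriv ?_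
  simp only [Pi.div_apply]
  field_simp

theorem hasDerivAt_quadratic (a b c x : ℝ) :
    HasDerivAt (fun t : ℝ => a * t ^ 2 + b * t + c) (2 * a * x + b) x := by
  refine ((((hasDerivAt_id x).pow 2).const_mul a).add
    ((hasDerivAt_id x).const_mul b) |>.add_const c).congr_deriv ?_
  simp; ring

theorem hasDerivAt_sqAdd_fst (u v : ℝ) :
    HasDerivAt (fun x => sqAdd (x, v)) (4 * u * (u ^ 2 + v ^ 2 + 1)) u := by
  unfold sqAdd
  refine (((((hasDerivAt_quadratic 1 0 (1 - v ^ 2) u).pow 2).add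
    (hasDerivAt_quadratic (4 * v ^ 2) 0 0 u))).congr_of_eventuallyEq
      (.of_forall fun x => ?_)).congr_deriv ?_
  · simp; ring
  · simp; ring

theorem hasDerivAt_sqSub_fst (u v : ℝ) :
    HasDerivAt (fun x => sqSub (x, v)) (4 * u * (u ^ 2 + v ^ 2 - 1)) u := by
  unfold sqSub
  refine (((((hasDerivAt_quadratic 1 0 (-1 - v ^ 2) u).pow 2).add
    (hasDerivAt_quadratic (4 * v ^ 2) 0 0 u))).congr_of_eventuallyEq
      (.of_forall fun x => ?_)).congr_deriv ?_
  · simp; ring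
  · simp; ring

theorem sqAdd_swap (u v : ℝ) : sqAdd (v, u) = sqSub (u, v) := by
  unfold sqAdd sqSub; ring

theorem hasDerivAt_sqAdd_snd (u v : ℝ) :
    HasDerivAt (fun y => sqAdd (u, y)) (4 * v * (u ^ 2 + v ^ 2 - 1)) v := by
  simp only [sqAdd_swap]
  exact (hasDerivAt_sqSub_fst v u).congr_deriv (by ring)

theorem hasDerivAt_sqSub_snd (u v : ℝ) :
    HasDerivAt (fun y => sqSub (u, y)) (4 * v * (u ^ 2 + v ^ 2 + 1)) v := by
  simp only [← sqAdd_swap]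
  exact (hasDerivAt_sqAdd_fst v u).congr_deriv (by ring)

theorem σu_eq {p : ℝ × ℝ} (hp : p.1 ^ 2 + p.2 ^ 2 - 1 ≠ 0) : σu p = scherkU p := by
  obtain ⟨u, v⟩ := p
  have hA := (sqAdd_pos hp).ne'
  have hC := (sqSub_pos hp).ne'
  simp only at hp
  have h1 : HasDerivAt (fun x => arctan (2 * x / (x ^ 2 + v ^ 2 - 1))) (scherkU (u, v)).1 u := by
    refine (hasDerivAt_arctan_div (f := fun x => 2 * x) (g := fun x => x ^ 2 + v ^ 2 - 1)
      ((hasDerivAt_quadratic 0 2 0 u).congr_of_eventuallyEq (.of_forall fun x => by simp))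
      ((hasDerivAt_quadratic 1 0 (v ^ 2 - 1) u).congr_of_eventuallyEq
        (.of_forall fun x => by simp; ring)) hp).congr_deriv ?_
    simp only [scherkU]
    congr 1
    · ring
    · unfold sqAdd; ring
  have h2 : HasDerivAt (fun x => arctan (-2 * v / (x ^ 2 + v ^ 2 - 1))) (scherkU (u, v)).2.1 u := by
    refine (hasDerivAt_arctan_div (f := fun x => -2 * v) (g := fun x => x ^ 2 + v ^ 2 - 1)
      (hasDerivAt_const _ _)
      ((hasDerivAt_quadratic 1 0 (v ^ 2 - 1) u).congr_of_eventuallyEq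
        (.of_forall fun x => by simp; ring)) hp).congr_deriv ?_
    simp only [scherkU]
    congr 1
    · ring
    · unfold sqSub; ring
  have h3 : HasDerivAt (fun x => (1 / 2) * Real.log (sqAdd (x, v) / sqSub (x, v)))
      (scherkU (u, v)).2.2 u := by
    refine (hasDerivAt_log_div (hasDerivAt_sqAdd_fst u v) (hasDerivAt_sqSub_fst u v)
      hA hC).congr_deriv ?_
    simp only [scherkU]
    ring
  exact (h1.prodMk (h2.prodMk h3)).deriv

theorem σv_eq {p : ℝ × ℝ} (hp : p.1 ^ 2 + p.2 ^ 2 - 1 ≠ 0) : σv p = scherkV p := by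
  obtain ⟨u, v⟩ := p
  have hA := (sqAdd_pos hp).ne'
  have hC := (sqSub_pos hp).ne'
  simp only at hp
  have h1 : HasDerivAt (fun y => arctan (2 * u / (u ^ 2 + y ^ 2 - 1))) (scherkV (u, v)).1 v := by
    refine (hasDerivAt_arctan_div (f := fun y => 2 * u) (g := fun y => u ^ 2 + y ^ 2 - 1)
      (hasDerivAt_const _ _)
      ((hasDerivAt_quadratic 1 0 (u ^ 2 - 1) v).congr_of_eventuallyEq
        (.of_forall fun x => by simp; ring)) hp).congr_deriv ?_
    simp only [scherkV]
    congr 1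
    · ring
    · unfold sqAdd; ring
  have h2 : HasDerivAt (fun y => arctan (-2 * y / (u ^ 2 + y ^ 2 - 1))) (scherkV (u, v)).2.1 v := by
    refine (hasDerivAt_arctan_div (f := fun y => -2 * y) (g := fun y => u ^ 2 + y ^ 2 - 1)
      ((hasDerivAt_quadratic 0 (-2) 0 v).congr_of_eventuallyEq (.of_forall fun x => by simp))
      ((hasDerivAt_quadratic 1 0 (u ^ 2 - 1) v).congr_of_eventuallyEq
        (.of_forall fun x => by simp; ring)) hp).congr_deriv ?_
    simp only [scherkV]
    congr 1
    · ring
    · unfold sqSub; ring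
  have h3 : HasDerivAt (fun y => (1 / 2) * Real.log (sqAdd (u, y) / sqSub (u, y)))
      (scherkV (u, v)).2.2 v := by
    refine (hasDerivAt_log_div (hasDerivAt_sqAdd_snd u v) (hasDerivAt_sqSub_snd u v)
      hA hC).congr_deriv ?_
    simp only [scherkV]
    ring
  exact (h1.prodMk (h2.prodMk h3)).deriv

theorem eventually_fst {u v : ℝ} (hp : u ^ 2 + v ^ 2 - 1 ≠ 0) :
    ∀ᶠ x in nhds u, x ^ 2 + v ^ 2 - 1 ≠ 0 :=
  (by fun_prop : Continuous fun x : ℝ => x ^ 2 + v ^ 2 - 1).continuousAt.eventually_ne hp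

theorem eventually_snd {u v : ℝ} (hp : u ^ 2 + v ^ 2 - 1 ≠ 0) :
    ∀ᶠ y in nhds v, u ^ 2 + y ^ 2 - 1 ≠ 0 :=
  (by fun_prop : Continuous fun y : ℝ => u ^ 2 + y ^ 2 - 1).continuousAt.eventually_ne hp

theorem hasDerivAt_cubic (a b c d x : ℝ) :
    HasDerivAt (fun t : ℝ => a * t ^ 3 + b * t ^ 2 + c * t + d)
      (3 * a * x ^ 2 + 2 * b * x + c) x := by
  refine ((((hasDerivAt_id x).pow 3).const_mul a).add (hasDerivAt_quadratic b c d x)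
    |>.congr_of_eventuallyEq (.of_forall fun t => ?_)).congr_deriv ?_
  · simp; ring
  · simp; ring

/-- The common shape of the second derivatives of the parametrization: the derivative of
`(f/A, g/C, h/A - k/C)`. -/
theorem hasDerivAt_triple {A C f g h k : ℝ → ℝ} {A' C' f' g' h' k' x : ℝ}
    (hA : HasDerivAt A A' x) (hC : HasDerivAt C C' x) (hf : HasDerivAt f f' x)
    (hg : HasDerivAt g g' x) (hh : HasDerivAt h h' x) (hk : HasDerivAt k k' x)
    (hA0 : A x ≠ 0) (hC0 : C x ≠ 0) :
    HasDerivAt (fun t => (f t / A t, g t / C t, h t / A t - k t / C t))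
      ((f' * A x - f x * A') / A x ^ 2, (g' * C x - g x * C') / C x ^ 2,
        (h' * A x - h x * A') / A x ^ 2 - (k' * C x - k x * C') / C x ^ 2) x :=
  (hf.div hA hA0).prodMk ((hg.div hC hC0).prodMk ((hh.div hA hA0).sub (hk.div hC hC0)))

theorem σuu_eq {u v : ℝ} (hp : u ^ 2 + v ^ 2 - 1 ≠ 0) :
    σuu (u, v) =
      ((-4 * u * sqAdd (u, v) + 2 * (1 + u ^ 2 - v ^ 2) * (4 * u * (u ^ 2 + v ^ 2 + 1)))
          / sqAdd (u, v) ^ 2,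
        (4 * v * sqSub (u, v) - 4 * u * v * (4 * u * (u ^ 2 + v ^ 2 - 1))) / sqSub (u, v) ^ 2,
        ((6 * u ^ 2 + 2 * v ^ 2 + 2) * sqAdd (u, v)
            - 2 * u * (u ^ 2 + v ^ 2 + 1) * (4 * u * (u ^ 2 + v ^ 2 + 1))) / sqAdd (u, v) ^ 2
          - ((6 * u ^ 2 + 2 * v ^ 2 - 2) * sqSub (u, v)
            - 2 * u * (u ^ 2 + v ^ 2 - 1) * (4 * u * (u ^ 2 + v ^ 2 - 1))) / sqSub (u, v) ^ 2) := by
  have key := hasDerivAt_triple (hasDerivAt_sqAdd_fst u v) (hasDerivAt_sqSub_fst u v)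
    (hasDerivAt_cubic 0 (-2) 0 (-2 * (1 - v ^ 2)) u) (hasDerivAt_cubic 0 0 (4 * v) 0 u)
    (hasDerivAt_cubic 2 0 (2 * (v ^ 2 + 1)) 0 u) (hasDerivAt_cubic 2 0 (2 * (v ^ 2 - 1)) 0 u)
    (sqAdd_pos (p := (u, v)) hp).ne' (sqSub_pos (p := (u, v)) hp).ne'
  refine ((key.congr_of_eventuallyEq ?_).congr_deriv ?_).deriv
  · filter_upwards [eventually_fst hp] with x hx
    rw [σu_eq hx]
    simp only [scherkU]
    ring_nf
  · ring_nf

theorem σuv_eq {u v : ℝ} (hp : u ^ 2 + v ^ 2 - 1 ≠ 0) :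
    σuv (u, v) =
      ((4 * v * sqAdd (u, v) + 2 * (1 + u ^ 2 - v ^ 2) * (4 * v * (u ^ 2 + v ^ 2 - 1)))
          / sqAdd (u, v) ^ 2,
        (4 * u * sqSub (u, v) - 4 * u * v * (4 * v * (u ^ 2 + v ^ 2 + 1))) / sqSub (u, v) ^ 2,
        (4 * u * v * sqAdd (u, v)
            - 2 * u * (u ^ 2 + v ^ 2 + 1) * (4 * v * (u ^ 2 + v ^ 2 - 1))) / sqAdd (u, v) ^ 2
          - (4 * u * v * sqSub (u, v)
            - 2 * u * (u ^ 2 + v ^ 2 - 1) * (4 * v * (u ^ 2 + v ^ 2 + 1))) / sqSub (u, v) ^ 2) := by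
  have key := hasDerivAt_triple (hasDerivAt_sqAdd_snd u v) (hasDerivAt_sqSub_snd u v)
    (hasDerivAt_cubic 0 2 0 (-2 * (1 + u ^ 2)) v) (hasDerivAt_cubic 0 0 (4 * u) 0 v)
    (hasDerivAt_cubic 0 (2 * u) 0 (2 * u * (u ^ 2 + 1)) v)
    (hasDerivAt_cubic 0 (2 * u) 0 (2 * u * (u ^ 2 - 1)) v)
    (sqAdd_pos (p := (u, v)) hp).ne' (sqSub_pos (p := (u, v)) hp).ne'
  refine ((key.congr_of_eventuallyEq ?_).congr_deriv ?_).deriv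
  · filter_upwards [eventually_snd hp] with y hy
    rw [σu_eq hy]
    simp only [scherkU]
    ring_nf
  · ring_nf

theorem σvv_eq {u v : ℝ} (hp : u ^ 2 + v ^ 2 - 1 ≠ 0) :
    σvv (u, v) =
      ((-4 * u * sqAdd (u, v) + 4 * u * v * (4 * v * (u ^ 2 + v ^ 2 - 1))) / sqAdd (u, v) ^ 2,
        (4 * v * sqSub (u, v) + 2 * (u ^ 2 - v ^ 2 - 1) * (4 * v * (u ^ 2 + v ^ 2 + 1)))
          / sqSub (u, v) ^ 2,
        ((2 * u ^ 2 + 6 * v ^ 2 - 2) * sqAdd (u, v)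
            - 2 * v * (u ^ 2 + v ^ 2 - 1) * (4 * v * (u ^ 2 + v ^ 2 - 1))) / sqAdd (u, v) ^ 2
          - ((2 * u ^ 2 + 6 * v ^ 2 + 2) * sqSub (u, v)
            - 2 * v * (u ^ 2 + v ^ 2 + 1) * (4 * v * (u ^ 2 + v ^ 2 + 1))) / sqSub (u, v) ^ 2) := by
  have key := hasDerivAt_triple (hasDerivAt_sqAdd_snd u v) (hasDerivAt_sqSub_snd u v)
    (hasDerivAt_cubic 0 0 (-4 * u) 0 v) (hasDerivAt_cubic 0 2 0 (-2 * (u ^ 2 - 1)) v)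
    (hasDerivAt_cubic 2 0 (2 * (u ^ 2 - 1)) 0 v) (hasDerivAt_cubic 2 0 (2 * (u ^ 2 + 1)) 0 v)
    (sqAdd_pos (p := (u, v)) hp).ne' (sqSub_pos (p := (u, v)) hp).ne'
  refine ((key.congr_of_eventuallyEq ?_).congr_deriv ?_).deriv
  · filter_upwards [eventually_snd hp] with y hy
    rw [σv_eq hy]
    simp only [scherkV]
    ring_nf
  · ring_nf

/-- The conformal factor of the first fundamental form. -/
def conf (p : ℝ × ℝ) : ℝ := 4 * (1 + p.1 ^ 2 + p.2 ^ 2) ^ 2 / (sqAdd p * sqSub p)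

theorem conf_pos {p : ℝ × ℝ} (hp : p.1 ^ 2 + p.2 ^ 2 - 1 ≠ 0) : 0 < conf p := by
  have := sqAdd_pos hp
  have := sqSub_pos hp
  unfold conf
  positivity

theorem g11_eq {p : ℝ × ℝ} (hp : p.1 ^ 2 + p.2 ^ 2 - 1 ≠ 0) : g11 p = conf p := by
  have hA := (sqAdd_pos hp).ne'
  have hC := (sqSub_pos hp).ne'
  simp only [g11, σu_eq hp, scherkU, dot3, conf]
  field_simp
  simp only [sqAdd, sqSub]
  ring

theorem g22_eq {p : ℝ × ℝ} (hp : p.1 ^ 2 + p.2 ^ 2 - 1 ≠ 0) : g22 p = conf p := by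
  have hA := (sqAdd_pos hp).ne'
  have hC := (sqSub_pos hp).ne'
  simp only [g22, σv_eq hp, scherkV, dot3, conf]
  field_simp
  simp only [sqAdd, sqSub]
  ring

theorem g12_eq {p : ℝ × ℝ} (hp : p.1 ^ 2 + p.2 ^ 2 - 1 ≠ 0) : g12 p = 0 := by
  have hA := (sqAdd_pos hp).ne'
  have hC := (sqSub_pos hp).ne'
  simp only [g12, σu_eq hp, σv_eq hp, scherkU, scherkV, dot3]
  field_simp
  simp only [sqAdd, sqSub]
  ring

theorem detg_eq {p : ℝ × ℝ} (hp : p.1 ^ 2 + p.2 ^ 2 - 1 ≠ 0) : detg p = conf p ^ 2 := by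
  rw [detg, g11_eq hp, g22_eq hp, g12_eq hp]; ring

theorem cross3_eq {p : ℝ × ℝ} (hp : p.1 ^ 2 + p.2 ^ 2 - 1 ≠ 0) :
    cross3 (σu p) (σv p) = (conf p / (1 + p.1 ^ 2 + p.2 ^ 2)) •
      (-2 * p.1, -2 * p.2, p.1 ^ 2 + p.2 ^ 2 - 1) := by
  have hA := (sqAdd_pos hp).ne'
  have hC := (sqSub_pos hp).ne'
  have hr : (1 + p.1 ^ 2 + p.2 ^ 2) ≠ 0 := by positivity
  simp only [cross3, σu_eq hp, σv_eq hp, scherkU, scherkV, conf, Prod.smul_mk, smul_eq_mul,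
    Prod.mk.injEq]
  refine ⟨?_, ?_, ?_⟩
  · field_simp
    simp only [sqAdd, sqSub]
    ring
  · field_simp
    simp only [sqAdd, sqSub]
    ring
  · field_simp
    ring

theorem NS_eq {p : ℝ × ℝ} (hp : p.1 ^ 2 + p.2 ^ 2 - 1 ≠ 0) :
    NS p = (1 / (1 + p.1 ^ 2 + p.2 ^ 2)) • (-2 * p.1, -2 * p.2, p.1 ^ 2 + p.2 ^ 2 - 1) := by
  have hE := conf_pos hp
  have hr : (1 + p.1 ^ 2 + p.2 ^ 2) ≠ 0 := by positivity
  have hn : norm3 (cross3 (σu p) (σv p)) = conf p := by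
    rw [norm3, ← Real.sqrt_sq hE.le, cross3_eq hp]
    congr 1
    simp only [dot3, Prod.smul_mk, smul_eq_mul]
    field_simp
    ring
  rw [NS, hn, cross3_eq hp, smul_smul]
  congr 1
  field_simp

theorem h11_eq {p : ℝ × ℝ} (hp : p.1 ^ 2 + p.2 ^ 2 - 1 ≠ 0) :
    h11 p = 4 * (p.1 ^ 4 - 6 * p.1 ^ 2 * p.2 ^ 2 + p.2 ^ 4 - 1) / (sqAdd p * sqSub p) := by
  obtain ⟨u, v⟩ := p
  have hA := (sqAdd_pos hp).ne'
  have hC := (sqSub_pos hp).ne'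
  have hr : (1 + u ^ 2 + v ^ 2) ≠ 0 := by positivity
  simp only at hp
  simp only [h11, NS_eq (p := (u, v)) hp, σuu_eq hp, dot3, Prod.smul_mk, smul_eq_mul]
  field_simp
  simp only [sqAdd, sqSub]
  ring

theorem h22_eq {p : ℝ × ℝ} (hp : p.1 ^ 2 + p.2 ^ 2 - 1 ≠ 0) :
    h22 p = -(4 * (p.1 ^ 4 - 6 * p.1 ^ 2 * p.2 ^ 2 + p.2 ^ 4 - 1) / (sqAdd p * sqSub p)) := by
  obtain ⟨u, v⟩ := p
  have hA := (sqAdd_pos hp).ne'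
  have hC := (sqSub_pos hp).ne'
  have hr : (1 + u ^ 2 + v ^ 2) ≠ 0 := by positivity
  simp only at hp
  simp only [h22, NS_eq (p := (u, v)) hp, σvv_eq hp, dot3, Prod.smul_mk, smul_eq_mul]
  field_simp
  simp only [sqAdd, sqSub]
  ring

theorem h12_eq {p : ℝ × ℝ} (hp : p.1 ^ 2 + p.2 ^ 2 - 1 ≠ 0) :
    h12 p = 16 * p.1 * p.2 * (p.1 ^ 2 - p.2 ^ 2) / (sqAdd p * sqSub p) := by
  obtain ⟨u, v⟩ := p
  have hA := (sqAdd_pos hp).ne'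
  have hC := (sqSub_pos hp).ne'
  have hr : (1 + u ^ 2 + v ^ 2) ≠ 0 := by positivity
  simp only at hp
  simp only [h12, NS_eq (p := (u, v)) hp, σuv_eq hp, dot3, Prod.smul_mk, smul_eq_mul]
  field_simp
  simp only [sqAdd, sqSub]
  ring

theorem κ_mul_conf {p : ℝ × ℝ} (hp : p.1 ^ 2 + p.2 ^ 2 - 1 ≠ 0) :
    κ p * conf p = -4 / (1 + p.1 ^ 2 + p.2 ^ 2) ^ 2 := by
  have hA := (sqAdd_pos hp).ne'
  have hC := (sqSub_pos hp).ne'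
  have hr : (1 + p.1 ^ 2 + p.2 ^ 2) ≠ 0 := by positivity
  rw [κ, detg_eq hp, h11_eq hp, h22_eq hp, h12_eq hp, conf]
  field_simp
  simp only [sqAdd, sqSub]
  ring

theorem ae_off_circle : ∀ᵐ p : ℝ × ℝ, p.1 ^ 2 + p.2 ^ 2 - 1 ≠ 0 := by
  have hcl : IsClosed {p : ℝ × ℝ | p.1 ^ 2 + p.2 ^ 2 - 1 = 0} :=
    isClosed_eq (by fun_prop) continuous_const
  have : volume {p : ℝ × ℝ | p.1 ^ 2 + p.2 ^ 2 - 1 = 0} = 0 := by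
    rw [Measure.volume_eq_prod, Measure.measure_prod_null hcl.measurableSet]
    refine .of_forall fun x => ?_
    refine ((Set.toFinite {√(1 - x ^ 2), -√(1 - x ^ 2)}).subset ?_).measure_zero _
    intro y (hy : x ^ 2 + y ^ 2 - 1 = 0)
    have h : 1 - x ^ 2 = y ^ 2 := by linarith
    rw [h, Real.sqrt_sq_eq_abs]
    rcases abs_choice y with h | h <;> simp [h]
  rw [ae_iff]
  simpa using this

/-- The conformal invariance of the Dirichlet integral and the fact that the Gauss map is the
inverse stereographic projection turn `Q` into a weighted form on the flat square. -/
theorem Q_eq (φ : ℝ × ℝ → ℝ) :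
    Q φ = ∫ p in Ω₀, (pdU φ p ^ 2 + pdV φ p ^ 2 - 8 * φ p ^ 2 / (1 + p.1 ^ 2 + p.2 ^ 2) ^ 2) := by
  refine integral_congr_ae (ae_restrict_of_ae ?_)
  filter_upwards [ae_off_circle] with p hp
  have hE := conf_pos hp
  have hr : (1 + p.1 ^ 2 + p.2 ^ 2) ≠ 0 := by positivity
  have hκ : κ p = -4 / (1 + p.1 ^ 2 + p.2 ^ 2) ^ 2 / conf p := by
    rw [← κ_mul_conf hp]; field_simp
  rw [ginv11, ginv12, ginv22, detg_eq hp, g11_eq hp, g12_eq hp, g22_eq hp,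
    Real.sqrt_sq hE.le, hκ]
  field_simp
  ring

/-- The polynomial on `ℝ × ℝ` given by a list of coefficients and exponent pairs. -/
def monoSum (L : List (ℝ × ℕ × ℕ)) (p : ℝ × ℝ) : ℝ :=
  (L.map fun t => t.1 * (p.1 ^ t.2.1 * p.2 ^ t.2.2)).sum

theorem integral_Ioo_pow (i : ℕ) :
    ∫ x in Set.Ioo (-1 : ℝ) 1, x ^ i = (1 - (-1) ^ (i + 1)) / (i + 1) := by
  rw [← integral_Ioc_eq_integral_Ioo, ← intervalIntegral.integral_of_le (by norm_num),
    integral_pow, one_pow]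

theorem integral_Ω₀_monomial (i j : ℕ) :
    ∫ p in Ω₀, p.1 ^ i * p.2 ^ j =
      (1 - (-1) ^ (i + 1)) / (i + 1) * ((1 - (-1) ^ (j + 1)) / (j + 1)) := by
  rw [← integral_Ioo_pow, ← integral_Ioo_pow, Ω₀, Measure.volume_eq_prod]
  exact setIntegral_prod_mul (fun x : ℝ => x ^ i) (fun y : ℝ => y ^ j) _ _

theorem Ω₀_subset : Ω₀ ⊆ Set.Icc (-1 : ℝ) 1 ×ˢ Set.Icc (-1 : ℝ) 1 :=
  Set.prod_mono Set.Ioo_subset_Icc_self Set.Ioo_subset_Icc_self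

theorem integrableOn_Ω₀ {f : ℝ × ℝ → ℝ} (hf : Continuous f) : IntegrableOn f Ω₀ :=
  (hf.continuousOn.integrableOn_compact (isCompact_Icc.prod isCompact_Icc)).mono_set Ω₀_subset

theorem measurableSet_Ω₀ : MeasurableSet Ω₀ := measurableSet_Ioo.prod measurableSet_Ioo

theorem continuous_monoSum (L : List (ℝ × ℕ × ℕ)) : Continuous (monoSum L) := by
  induction L with
  | nil => exact continuous_const
  | cons t L ih =>
    have : monoSum (t :: L) = fun p => t.1 * (p.1 ^ t.2.1 * p.2 ^ t.2.2) + monoSum L p := by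
      ext p; simp [monoSum]
    rw [this]
    fun_prop

theorem integral_Ω₀_monoSum (L : List (ℝ × ℕ × ℕ)) :
    ∫ p in Ω₀, monoSum L p = (L.map fun t => t.1 *
      ((1 - (-1 : ℝ) ^ (t.2.1 + 1)) / ((t.2.1 : ℝ) + 1) *
        ((1 - (-1 : ℝ) ^ (t.2.2 + 1)) / ((t.2.2 : ℝ) + 1)))).sum := by
  induction L with
  | nil => simp [monoSum]
  | cons t L ih =>
    have h : ∀ p, monoSum (t :: L) p = t.1 * (p.1 ^ t.2.1 * p.2 ^ t.2.2) + monoSum L p := by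
      intro p; simp [monoSum]
    simp only [h]
    rw [integral_add (integrableOn_Ω₀ (by fun_prop)) (integrableOn_Ω₀ (continuous_monoSum L)),
      integral_const_mul, integral_Ω₀_monomial, ih]
    simp

/-- The cubic Hermite interpolant of `1 / (1 + s) ^ 2` at the double nodes `1/2` and `5/4`. -/
def hermiteMinorant (s : ℝ) : ℝ := (5836 - 8112 * s + 5184 * s ^ 2 - 1280 * s ^ 3) / 6561

theorem hermiteMinorant_le {s : ℝ} (hs : 0 ≤ s) : hermiteMinorant s ≤ 1 / (1 + s) ^ 2 := by
  rw [le_div_iff₀ (by positivity)]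
  have h : 1 - hermiteMinorant s * (1 + s) ^ 2 =
      (s - 1 / 2) ^ 2 * (s - 5 / 4) ^ 2 * ((1280 * s + 1856) / 6561) := by
    unfold hermiteMinorant; ring
  have : 0 ≤ (s - 1 / 2) ^ 2 * (s - 5 / 4) ^ 2 * ((1280 * s + 1856) / 6561) := by positivity
  linarith

theorem combination_eq (c : Fin 3 → ℝ) (p : ℝ × ℝ) : ∑ i, c i * Φ i p =
    c 0 * ((p.1 * p.2) ^ 2 + 2) + c 1 * (p.1 - p.1 ^ 5 / 4) + c 2 * (p.2 - p.2 ^ 5 / 4) := by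
  simp [Fin.sum_univ_three, Φ]

theorem pdU_combination (c : Fin 3 → ℝ) (p : ℝ × ℝ) : pdU (fun p => ∑ i, c i * Φ i p) p =
    2 * c 0 * p.1 * p.2 ^ 2 + c 1 * (1 - 5 / 4 * p.1 ^ 4) := by
  simp only [pdU, combination_eq]
  have h1 := ((((hasDerivAt_id p.1).mul_const p.2).pow 2).add_const 2).const_mul (c 0)
  have h2 := ((hasDerivAt_id p.1).sub (((hasDerivAt_id p.1).pow 5).div_const 4)).const_mul (c 1)
  refine ((h1.add h2).add_const (c 2 * (p.2 - p.2 ^ 5 / 4))).deriv.trans ?_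
  simp
  ring

theorem pdV_combination (c : Fin 3 → ℝ) (p : ℝ × ℝ) : pdV (fun p => ∑ i, c i * Φ i p) p =
    2 * c 0 * p.1 ^ 2 * p.2 + c 2 * (1 - 5 / 4 * p.2 ^ 4) := by
  simp only [pdV, combination_eq]
  have h1 := (((((hasDerivAt_id p.2).const_mul p.1).pow 2).add_const 2).const_mul (c 0)).add_const
    (c 1 * (p.1 - p.1 ^ 5 / 4))
  have h2 := ((hasDerivAt_id p.2).sub (((hasDerivAt_id p.2).pow 5).div_const 4)).const_mul (c 2)
  refine (h1.add h2).deriv.trans ?_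
  simp
  ring

/-- The expansion of the polynomial majorant of the integrand of `Q`. -/
def majorantList (c : Fin 3 → ℝ) : List (ℝ × ℕ × ℕ) :=
  [((1) * (c 2 ^ 2) + (1) * (c 1 ^ 2) + (-186752/6561) * (c 0 ^ 2), 0, 0),
    ((-186752/6561) * (c 0 * c 2), 0, 1),
    ((-46688/6561) * (c 2 ^ 2) + (86528/2187) * (c 0 ^ 2), 0, 2),
    ((86528/2187) * (c 0 * c 2), 0, 3),
    ((32329/4374) * (c 2 ^ 2) + (-2048/81) * (c 0 ^ 2), 0, 4),
    ((-119200/6561) * (c 0 * c 2), 0, 5),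
    ((-18128/6561) * (c 2 ^ 2) + (40960/6561) * (c 0 ^ 2), 0, 6),
    ((-23936/6561) * (c 0 * c 2), 0, 7),
    ((-191303/104976) * (c 2 ^ 2), 0, 8),
    ((512/81) * (c 0 * c 2), 0, 9),
    ((17818/6561) * (c 2 ^ 2), 0, 10),
    ((-10240/6561) * (c 0 * c 2), 0, 11),
    ((-1064/6561) * (c 2 ^ 2), 0, 12),
    ((-32/81) * (c 2 ^ 2), 0, 14),
    ((640/6561) * (c 2 ^ 2), 0, 16),
    ((-186752/6561) * (c 0 * c 1), 1, 0),
    ((-93376/6561) * (c 1 * c 2), 1, 1),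
    ((95276/2187) * (c 0 * c 1), 1, 2),
    ((43264/2187) * (c 1 * c 2), 1, 3),
    ((-2048/81) * (c 0 * c 1), 1, 4),
    ((-59600/6561) * (c 1 * c 2), 1, 5),
    ((40960/6561) * (c 0 * c 1), 1, 6),
    ((-11968/6561) * (c 1 * c 2), 1, 7),
    ((256/81) * (c 1 * c 2), 1, 9),
    ((-5120/6561) * (c 1 * c 2), 1, 11),
    ((-46688/6561) * (c 1 ^ 2) + (86528/2187) * (c 0 ^ 2), 2, 0),
    ((95276/2187) * (c 0 * c 2), 2, 1),
    ((21632/2187) * (c 2 ^ 2) + (21632/2187) * (c 1 ^ 2) + (-518528/6561) * (c 0 ^ 2), 2, 2),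
    ((-425152/6561) * (c 0 * c 2), 2, 3),
    ((-1024/81) * (c 2 ^ 2) + (-512/81) * (c 1 ^ 2) + (45412/729) * (c 0 ^ 2), 2, 4),
    ((17219/729) * (c 0 * c 2), 2, 5),
    ((-64/243) * (c 2 ^ 2) + (10240/6561) * (c 1 ^ 2) + (-2048/81) * (c 0 ^ 2), 2, 6),
    ((23344/6561) * (c 0 * c 2), 2, 7),
    ((512/81) * (c 2 ^ 2) + (40960/6561) * (c 0 ^ 2), 2, 8),
    ((-42688/6561) * (c 0 * c 2), 2, 9),
    ((-1256/729) * (c 2 ^ 2), 2, 10),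
    ((256/81) * (c 0 * c 2), 2, 11),
    ((-64/81) * (c 2 ^ 2), 2, 12),
    ((-5120/6561) * (c 0 * c 2), 2, 13),
    ((640/2187) * (c 2 ^ 2), 2, 14),
    ((86528/2187) * (c 0 * c 1), 3, 0),
    ((43264/2187) * (c 1 * c 2), 3, 1),
    ((-425152/6561) * (c 0 * c 1), 3, 2),
    ((-2048/81) * (c 1 * c 2), 3, 3),
    ((84224/2187) * (c 0 * c 1), 3, 4),
    ((9664/2187) * (c 1 * c 2), 3, 5),
    ((-1024/81) * (c 0 * c 1), 3, 6),
    ((512/81) * (c 1 * c 2), 3, 7),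
    ((20480/6561) * (c 0 * c 1), 3, 8),
    ((-5120/2187) * (c 1 * c 2), 3, 9),
    ((32329/4374) * (c 1 ^ 2) + (-2048/81) * (c 0 ^ 2), 4, 0),
    ((-2048/81) * (c 0 * c 2), 4, 1),
    ((-512/81) * (c 2 ^ 2) + (-1024/81) * (c 1 ^ 2) + (45412/729) * (c 0 ^ 2), 4, 2),
    ((84224/2187) * (c 0 * c 2), 4, 3),
    ((10240/2187) * (c 2 ^ 2) + (10240/2187) * (c 1 ^ 2) + (-378464/6561) * (c 0 ^ 2), 4, 4),
    ((-512/27) * (c 0 * c 2), 4, 5),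
    ((256/81) * (c 2 ^ 2) + (20864/729) * (c 0 ^ 2), 4, 6),
    ((-64/243) * (c 0 * c 2), 4, 7),
    ((-5120/2187) * (c 2 ^ 2) + (-512/81) * (c 0 ^ 2), 4, 8),
    ((512/81) * (c 0 * c 2), 4, 9),
    ((-32/81) * (c 2 ^ 2) + (10240/6561) * (c 0 ^ 2), 4, 10),
    ((-5120/2187) * (c 0 * c 2), 4, 11),
    ((640/2187) * (c 2 ^ 2), 4, 12),
    ((-119200/6561) * (c 0 * c 1), 5, 0),
    ((-59600/6561) * (c 1 * c 2), 5, 1),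
    ((17219/729) * (c 0 * c 1), 5, 2),
    ((9664/2187) * (c 1 * c 2), 5, 3),
    ((-512/27) * (c 0 * c 1), 5, 4),
    ((35636/6561) * (c 1 * c 2), 5, 5),
    ((51200/6561) * (c 0 * c 1), 5, 6),
    ((-12368/6561) * (c 1 * c 2), 5, 7),
    ((-64/81) * (c 1 * c 2), 5, 9),
    ((1280/6561) * (c 1 * c 2), 5, 11),
    ((-18128/6561) * (c 1 ^ 2) + (40960/6561) * (c 0 ^ 2), 6, 0),
    ((40960/6561) * (c 0 * c 2), 6, 1),
    ((10240/6561) * (c 2 ^ 2) + (-64/243) * (c 1 ^ 2) + (-2048/81) * (c 0 ^ 2), 6, 2),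
    ((-1024/81) * (c 0 * c 2), 6, 3),
    ((256/81) * (c 1 ^ 2) + (20864/729) * (c 0 ^ 2), 6, 4),
    ((51200/6561) * (c 0 * c 2), 6, 5),
    ((-5120/6561) * (c 2 ^ 2) + (-5120/6561) * (c 1 ^ 2) + (-1024/81) * (c 0 ^ 2), 6, 6),
    ((256/81) * (c 0 * c 2), 6, 7),
    ((10240/2187) * (c 0 ^ 2), 6, 8),
    ((-5120/2187) * (c 0 * c 2), 6, 9),
    ((640/6561) * (c 2 ^ 2), 6, 10),
    ((-23936/6561) * (c 0 * c 1), 7, 0),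
    ((-11968/6561) * (c 1 * c 2), 7, 1),
    ((23344/6561) * (c 0 * c 1), 7, 2),
    ((512/81) * (c 1 * c 2), 7, 3),
    ((-64/243) * (c 0 * c 1), 7, 4),
    ((-12368/6561) * (c 1 * c 2), 7, 5),
    ((256/81) * (c 0 * c 1), 7, 6),
    ((-128/81) * (c 1 * c 2), 7, 7),
    ((-5120/6561) * (c 0 * c 1), 7, 8),
    ((1280/2187) * (c 1 * c 2), 7, 9),
    ((-191303/104976) * (c 1 ^ 2), 8, 0),
    ((512/81) * (c 1 ^ 2) + (40960/6561) * (c 0 ^ 2), 8, 2),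
    ((20480/6561) * (c 0 * c 2), 8, 3),
    ((-5120/2187) * (c 1 ^ 2) + (-512/81) * (c 0 ^ 2), 8, 4),
    ((10240/2187) * (c 0 ^ 2), 8, 6),
    ((-5120/6561) * (c 0 * c 2), 8, 7),
    ((512/81) * (c 0 * c 1), 9, 0),
    ((256/81) * (c 1 * c 2), 9, 1),
    ((-42688/6561) * (c 0 * c 1), 9, 2),
    ((-5120/2187) * (c 1 * c 2), 9, 3),
    ((512/81) * (c 0 * c 1), 9, 4),
    ((-64/81) * (c 1 * c 2), 9, 5),
    ((-5120/2187) * (c 0 * c 1), 9, 6),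
    ((1280/2187) * (c 1 * c 2), 9, 7),
    ((17818/6561) * (c 1 ^ 2), 10, 0),
    ((-1256/729) * (c 1 ^ 2), 10, 2),
    ((-32/81) * (c 1 ^ 2) + (10240/6561) * (c 0 ^ 2), 10, 4),
    ((640/6561) * (c 1 ^ 2), 10, 6),
    ((-10240/6561) * (c 0 * c 1), 11, 0),
    ((-5120/6561) * (c 1 * c 2), 11, 1),
    ((256/81) * (c 0 * c 1), 11, 2),
    ((-5120/2187) * (c 0 * c 1), 11, 4),
    ((1280/6561) * (c 1 * c 2), 11, 5),
    ((-1064/6561) * (c 1 ^ 2), 12, 0),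
    ((-64/81) * (c 1 ^ 2), 12, 2),
    ((640/2187) * (c 1 ^ 2), 12, 4),
    ((-5120/6561) * (c 0 * c 1), 13, 2),
    ((-32/81) * (c 1 ^ 2), 14, 0),
    ((640/2187) * (c 1 ^ 2), 14, 2),
    ((640/6561) * (c 1 ^ 2), 16, 0)]

theorem monoSum_majorantList (c : Fin 3 → ℝ) (p : ℝ × ℝ) : monoSum (majorantList c) p =
    (2 * c 0 * p.1 * p.2 ^ 2 + c 1 * (1 - 5 / 4 * p.1 ^ 4)) ^ 2
      + (2 * c 0 * p.1 ^ 2 * p.2 + c 2 * (1 - 5 / 4 * p.2 ^ 4)) ^ 2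
      - 8 * (c 0 * ((p.1 * p.2) ^ 2 + 2) + c 1 * (p.1 - p.1 ^ 5 / 4)
        + c 2 * (p.2 - p.2 ^ 5 / 4)) ^ 2 * hermiteMinorant (p.1 ^ 2 + p.2 ^ 2) := by
  simp only [monoSum, majorantList, hermiteMinorant, List.map_cons, List.map_nil, List.sum_cons,
    List.sum_nil]
  ring

theorem integral_majorantList (c : Fin 3 → ℝ) : ∫ p in Ω₀, monoSum (majorantList c) p =
    -(132184584608 / 2387055825) * c 0 ^ 2
      - 42726739 / 2557766484 * (c 1 ^ 2 + c 2 ^ 2) := by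
  rw [integral_Ω₀_monoSum]
  simp only [majorantList, List.map_cons, List.map_nil, List.sum_cons, List.sum_nil]
  norm_num
  ring

theorem Q_combination_neg (c : Fin 3 → ℝ) (hc : c ≠ 0) : Q (fun p => ∑ i, c i * Φ i p) < 0 := by
  have hle : Q (fun p => ∑ i, c i * Φ i p) ≤ ∫ p in Ω₀, monoSum (majorantList c) p := by
    rw [Q_eq]
    simp only [pdU_combination, pdV_combination]
    simp only [combination_eq]
    refine setIntegral_mono_on (integrableOn_Ω₀ ?_) (integrableOn_Ω₀ (continuous_monoSum _))
      measurableSet_Ω₀ fun p _ => ?_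
    · refine Continuous.sub (by fun_prop) (Continuous.div (by fun_prop) (by fun_prop) fun p => ?_)
      positivity
    · rw [monoSum_majorantList]
      have h := hermiteMinorant_le (s := p.1 ^ 2 + p.2 ^ 2) (by positivity)
      rw [← add_assoc] at h
      gcongr
      exact (mul_le_mul_of_nonneg_left h (by positivity)).trans_eq (mul_one_div _ _)
  rw [integral_majorantList] at hle
  have hpos : 0 < c 0 ^ 2 + (c 1 ^ 2 + c 2 ^ 2) := by
    obtain ⟨i, hi⟩ := Function.ne_iff.mp hc
    have hi : 0 < c i ^ 2 := sq_pos_of_ne_zero hi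
    have := sq_nonneg (c 0)
    have := sq_nonneg (c 1)
    have := sq_nonneg (c 2)
    fin_cases i <;> simp only [Fin.zero_eta, Fin.mk_one, Fin.reduceFinMk] at hi <;> linarith
  nlinarith [sq_nonneg (c 0), sq_nonneg (c 1), sq_nonneg (c 2)]

theorem linearIndependent_Φ : LinearIndependent ℝ Φ := by
  rw [Fintype.linearIndependent_iff]
  intro c hc
  by_contra! h
  have hc0 : c ≠ 0 := fun h0 => by simp [h0] at h
  have hneg := Q_combination_neg c hc0
  have : (fun p => ∑ i, c i * Φ i p) = fun _ => 0 := by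
    ext p
    simpa using congrFun hc p
  rw [this, Q_eq] at hneg
  simp [pdU, pdV] at hneg

theorem memF_of_contDiff {f : ℝ × ℝ → ℝ} (hf : ContDiff ℝ (⊤ : ℕ∞) f) : memF f := by
  refine ⟨hf.contDiffOn, fun i _ => ?_⟩
  have hcont : Continuous (iteratedFDeriv ℝ i f) :=
    hf.continuous_iteratedFDeriv (by exact_mod_cast le_top)
  obtain ⟨C, hC⟩ := (isCompact_Icc.prod isCompact_Icc :
    IsCompact (Set.Icc (-1 : ℝ) 1 ×ˢ Set.Icc (-1 : ℝ) 1)).exists_bound_of_continuousOn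
      hcont.continuousOn
  refine ⟨C, fun p hp => ?_⟩
  rw [iteratedFDerivWithin_of_isOpen i (isOpen_Ioo.prod isOpen_Ioo) hp]
  exact hC p (Ω₀_subset hp)

theorem contDiff_Φ (i : Fin 3) : ContDiff ℝ (⊤ : ℕ∞) (Φ i) := by
  fin_cases i <;> simp only [Φ] <;> simp <;> fun_prop

/-- every nontrivial linear combination of `φ¹, φ², φ³` has negative
second variation; consequently (the functions being linearly independent members of
`F(Ω₀)`) the modified index of the fundamental Scherk surface is at least 3. -/
theorem scherk_negative_on_span_and_indb_ge_three :
    (∀ c : Fin 3 → ℝ, c ≠ 0 → Q (fun p => ∑ i, c i * Φ i p) < 0) ∧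
    LinearIndependent ℝ Φ ∧ (∀ i, memF (Φ i)) ∧ 3 ≤ indbScherk := by
  refine ⟨Q_combination_neg, linearIndependent_Φ, fun i => memF_of_contDiff (contDiff_Φ i), ?_⟩
  refine le_sSup ⟨Submodule.span ℝ (Set.range Φ), .span_of_finite ℝ (Set.finite_range Φ), ?_, ?_, ?_⟩
  · intro f hf
    obtain ⟨c, rfl⟩ := (Submodule.mem_span_range_iff_exists_fun ℝ).mp hf
    refine memF_of_contDiff ?_
    rw [Finset.sum_fn]
    exact .sum fun i _ => (contDiff_Φ i).const_smul (c i)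
  · intro f hf hf0
    obtain ⟨c, rfl⟩ := (Submodule.mem_span_range_iff_exists_fun ℝ).mp hf
    have hc : c ≠ 0 := by rintro rfl; simp at hf0
    convert Q_combination_neg c hc using 2
    ext p
    simp
  · rw [finrank_span_eq_card linearIndependent_Φ]
    simp
end
end

section
/- There exist a real number R with 1.16 < R < 1.17 and a nonzero smooth function χ: ℝ → ℝ whose support is contained in (0, π/3) such that, defining for k = 0, 1, …, 5 the functions φ_k on the plane in polar coordinates by φ_k(u cos v, u sin v) = u·χ(v − kπ/3) for u > 0 and v ∈ [0, 2π), the functions φ₀, …, φ₅ have pairwise disjoint supports, satisfy Q⁵_R(φ_k) < 0 for each k, and Q⁵_R is negative definite on their 6-dimensional linear span; consequently ind_b(Σ₁⁵(R)) ≥ 6. -/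
noncomputable section
open MeasureTheory Real

/-- The plane `ℝ²` as a Euclidean space. -/
abbrev E2 : Type := EuclideanSpace ℝ (Fin 2)

/-- The point of `ℝ²` with Cartesian coordinates `(x, y)`. -/
def toE2 (x y : ℝ) : E2 := (WithLp.equiv 2 (Fin 2 → ℝ)).symm ![x, y]

/-- The second-variation quadratic form of the dihedral Enneper surface `Σ₁ⁿ(R)` of
order `n` and radius `R`, in the conformal planar coordinate `w`. -/
def QE (n : ℕ) (R : ℝ) (φ : E2 → ℝ) : ℝ :=
  ∫ w in Metric.ball (0 : E2) R,
    (‖gradient φ w‖ ^ 2 -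
      (8 * (n : ℝ) ^ 2 * ‖w‖ ^ (2 * n - 2) / (1 + ‖w‖ ^ (2 * n)) ^ 2) * φ w ^ 2)

/-- The second-variation quadratic form of the complete dihedral Enneper surface `Σ₁ⁿ`
(`R = ∞`). -/
def QEinf (n : ℕ) (φ : E2 → ℝ) : ℝ :=
  ∫ w : E2,
    (‖gradient φ w‖ ^ 2 -
      (8 * (n : ℝ) ^ 2 * ‖w‖ ^ (2 * n - 2) / (1 + ‖w‖ ^ (2 * n)) ^ 2) * φ w ^ 2)

/-- Membership in `F(B(0,R))`: smooth on the open ball `B(0,R)` with all partial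
derivatives of order `≤ 2` bounded there. -/
def memFE (R : ℝ) (φ : E2 → ℝ) : Prop :=
  ContDiffOn ℝ (⊤ : ℕ∞) φ (Metric.ball (0 : E2) R) ∧
    ∀ i : ℕ, i ≤ 2 → ∃ C : ℝ,
      ∀ w ∈ Metric.ball (0 : E2) R, ‖iteratedFDerivWithin ℝ i φ (Metric.ball (0 : E2) R) w‖ ≤ C

/-- The modified index `ind_b(Σ₁ⁿ(R))`: the supremum of the dimensions of
finite-dimensional subspaces of `F(B(0,R))` on which `Qⁿ_R` is negative definite. -/
def indbE (n : ℕ) (R : ℝ) : ℕ∞ :=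
  sSup {d : ℕ∞ | ∃ V : Submodule ℝ (E2 → ℝ), FiniteDimensional ℝ V ∧
    (∀ φ ∈ V, memFE R φ) ∧ (∀ φ ∈ V, φ ≠ 0 → QE n R φ < 0) ∧
    d = (Module.finrank ℝ V : ℕ∞)}

@[simp] lemma toE2_zero (x y : ℝ) : toE2 x y 0 = x := by simp [toE2]

@[simp] lemma toE2_one (x y : ℝ) : toE2 x y 1 = y := by simp [toE2]

lemma toE2_eq_smul_add (x y : ℝ) : toE2 x y = x • toE2 1 0 + y • toE2 0 1 := by
  ext i
  fin_cases i <;> simp [toE2]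

lemma hasDerivAt_toE2 {f g : ℝ → ℝ} {f' g' t : ℝ} (hf : HasDerivAt f f' t)
    (hg : HasDerivAt g g' t) : HasDerivAt (fun s => toE2 (f s) (g s)) (toE2 f' g') t := by
  simp_rw [toE2_eq_smul_add (f _), toE2_eq_smul_add f']
  exact (hf.smul_const _).add (hg.smul_const _)

lemma norm_toE2_polar {u : ℝ} (hu : 0 ≤ u) (v : ℝ) :
    ‖toE2 (u * cos v) (u * sin v)‖ = u := by
  rw [← sq_eq_sq₀ (norm_nonneg _) hu, EuclideanSpace.real_norm_sq_eq]
  simp only [Fin.sum_univ_two, toE2_zero, toE2_one]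
  linear_combination u ^ 2 * sin_sq_add_cos_sq v

lemma exists_polar {w : E2} (hw : w ≠ 0) :
    ∃ u v : ℝ, 0 < u ∧ w = toE2 (u * cos v) (u * sin v) := by
  have hz : (⟨w 0, w 1⟩ : ℂ) ≠ 0 := by
    intro h
    apply hw
    ext i
    have h0 := congrArg Complex.re h
    have h1 := congrArg Complex.im h
    fin_cases i <;> simpa
  refine ⟨‖(⟨w 0, w 1⟩ : ℂ)‖, Complex.arg ⟨w 0, w 1⟩, norm_pos_iff.2 hz, ?_⟩
  ext i
  fin_cases i <;> simp [toE2]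

lemma norm_gradient_sq_polar {F : E2 → ℝ} {ρ h : ℝ → ℝ} {u v ρ' h' : ℝ} (hu : 0 < u)
    (hF : DifferentiableAt ℝ F (toE2 (u * cos v) (u * sin v)))
    (hpol : ∀ s, 0 < s → ∀ t, F (toE2 (s * cos t) (s * sin t)) = ρ s * h t)
    (hρ : HasDerivAt ρ ρ' u) (hh : HasDerivAt h h' v) :
    ‖gradient F (toE2 (u * cos v) (u * sin v))‖ ^ 2 = (ρ' * h v) ^ 2 + (ρ u * h' / u) ^ 2 := by
  set w := toE2 (u * cos v) (u * sin v) with hw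
  have hinner (x y : ℝ) :
      fderiv ℝ F w (toE2 x y) = gradient F w 0 * x + gradient F w 1 * y := by
    rw [← toDual_gradient, InnerProductSpace.toDual_apply_apply, PiLp.inner_apply]
    simp [Fin.sum_univ_two, mul_comm]
  have hr : fderiv ℝ F w (toE2 (cos v) (sin v)) = ρ' * h v := by
    have h1 : HasDerivAt (fun s => toE2 (s * cos v) (s * sin v)) (toE2 (cos v) (sin v)) u := by
      simpa using hasDerivAt_toE2 ((hasDerivAt_id u).mul_const (cos v))
        ((hasDerivAt_id u).mul_const (sin v))
    refine (hF.hasFDerivAt.comp_hasDerivAt u h1).unique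
      ((hρ.mul_const (h v)).congr_of_eventuallyEq ?_)
    filter_upwards [lt_mem_nhds hu] with s hs using hpol s hs v
  have ht : fderiv ℝ F w (toE2 (u * -sin v) (u * cos v)) = ρ u * h' := by
    have h1 : HasDerivAt (fun t => toE2 (u * cos t) (u * sin t))
        (toE2 (u * -sin v) (u * cos v)) v :=
      hasDerivAt_toE2 ((hasDerivAt_cos v).const_mul u) ((hasDerivAt_sin v).const_mul u)
    refine (hF.hasFDerivAt.comp_hasDerivAt v h1).unique
      ((hh.const_mul (ρ u)).congr_of_eventuallyEq ?_)
    exact .of_forall fun t => hpol u hu t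
  rw [← hr, ← ht, hinner, hinner, EuclideanSpace.real_norm_sq_eq, Fin.sum_univ_two]
  field_simp
  linear_combination (-(gradient F w 0) ^ 2 - (gradient F w 1) ^ 2) * sin_sq_add_cos_sq v

lemma setIntegral_ball_eq_polar (f : E2 → ℝ) (R : ℝ) :
    ∫ w in Metric.ball (0 : E2) R, f w =
      ∫ p in Set.Ioo 0 R ×ˢ Set.Ioo (-π) π, p.1 * f (toE2 (p.1 * cos p.2) (p.1 * sin p.2)) := by
  have hmp : MeasurePreserving
      (((MeasurableEquiv.finTwoArrow (α := ℝ)).symm.trans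
        (MeasurableEquiv.toLp 2 (Fin 2 → ℝ))) : ℝ × ℝ ≃ᵐ E2) :=
    (volume_preserving_finTwoArrow ℝ).symm.trans (PiLp.volume_preserving_toLp (Fin 2))
  have happ (p : ℝ × ℝ) : ((MeasurableEquiv.finTwoArrow (α := ℝ)).symm.trans
        (MeasurableEquiv.toLp 2 (Fin 2 → ℝ))) p = toE2 p.1 p.2 := by
    ext i
    fin_cases i <;> simp [toE2]
  rw [← integral_indicator Metric.isOpen_ball.measurableSet,
    ← hmp.integral_comp (MeasurableEquiv.measurableEmbedding _), ← integral_comp_polarCoord_symm]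
  simp_rw [happ]
  have hsub : Set.Ioo 0 R ×ˢ Set.Ioo (-π) π ⊆ polarCoord.target := by
    rintro ⟨u, v⟩ ⟨hu, hv⟩
    exact ⟨hu.1, hv⟩
  rw [setIntegral_eq_of_subset_of_forall_sdiff_eq_zero
    polarCoord.open_target.measurableSet hsub]
  · refine setIntegral_congr_fun (measurableSet_Ioo.prod measurableSet_Ioo) ?_
    rintro ⟨u, v⟩ ⟨hu, hv⟩
    have : toE2 (u * cos v) (u * sin v) ∈ Metric.ball (0 : E2) R := by
      simpa [norm_toE2_polar hu.1.le] using hu.2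
    simp [this]
  · rintro ⟨u, v⟩ ⟨⟨hu, hv⟩, hn⟩
    have hu : 0 < u := hu
    have : toE2 (u * cos v) (u * sin v) ∉ Metric.ball (0 : E2) R := by
      intro h
      refine hn ⟨⟨hu, ?_⟩, hv⟩
      simpa [norm_toE2_polar hu.le] using h
    simp [this]

lemma Continuous.integrableOn_Ioo {f : ℝ → ℝ} (hf : Continuous f) (a b : ℝ) :
    IntegrableOn f (Set.Ioo a b) :=
  hf.integrableOn_Icc.mono_set Set.Ioo_subset_Icc_self

/-- The potential of the second variation as a function of the radius. -/
def enneperPotential (n : ℕ) (u : ℝ) : ℝ :=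
  8 * (n : ℝ) ^ 2 * u ^ (2 * n - 2) / (1 + u ^ (2 * n)) ^ 2

lemma continuous_enneperPotential (n : ℕ) : Continuous (enneperPotential n) := by
  unfold enneperPotential
  refine Continuous.div (by fun_prop) (by fun_prop) fun u => ?_
  rw [pow_mul]
  positivity

lemma integrableOn_sq_div_self {ρ : ℝ → ℝ} {R : ℝ} (hρ : Continuous ρ)
    (hle : ∀ u, 0 < u → |ρ u| ≤ u) : IntegrableOn (fun u => ρ u ^ 2 / u) (Set.Ioo 0 R) := by
  refine Integrable.mono' (continuous_id.integrableOn_Ioo 0 R)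
    (Measurable.aestronglyMeasurable (by fun_prop)) ?_
  refine (ae_restrict_iff' measurableSet_Ioo).2 (.of_forall fun u hu => ?_)
  have hu : 0 < u := hu.1
  rw [norm_eq_abs, abs_of_nonneg (by positivity), id, div_le_iff₀ hu, ← sq_abs]
  nlinarith [hle u hu, abs_nonneg (ρ u)]

lemma QE_eq_of_polar {n : ℕ} {R : ℝ} {F : E2 → ℝ} {ρ h : ℝ → ℝ}
    (hF : ∀ w ≠ 0, DifferentiableAt ℝ F w)
    (hpol : ∀ u, 0 < u → ∀ v, F (toE2 (u * cos v) (u * sin v)) = ρ u * h v)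
    (hρ : ContDiff ℝ 1 ρ) (hh : ContDiff ℝ 1 h) (hle : ∀ u, 0 < u → |ρ u| ≤ u) :
    QE n R F =
      (∫ u in Set.Ioo 0 R, u * (deriv ρ u ^ 2 - enneperPotential n u * ρ u ^ 2)) *
        (∫ v in Set.Ioo (-π) π, h v ^ 2) +
      (∫ u in Set.Ioo 0 R, ρ u ^ 2 / u) * ∫ v in Set.Ioo (-π) π, deriv h v ^ 2 := by
  have hρ' := hρ.continuous_deriv_one
  have hh' := hh.continuous_deriv_one
  have hρc := hρ.continuous
  have hhc := hh.continuous
  have hW := continuous_enneperPotential n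
  have i1 : IntegrableOn (fun u => u * (deriv ρ u ^ 2 - enneperPotential n u * ρ u ^ 2))
      (Set.Ioo 0 R) := Continuous.integrableOn_Ioo (by fun_prop) _ _
  have i2 : IntegrableOn (fun v => h v ^ 2) (Set.Ioo (-π) π) :=
    Continuous.integrableOn_Ioo (by fun_prop) _ _
  have i3 : IntegrableOn (fun v => deriv h v ^ 2) (Set.Ioo (-π) π) :=
    Continuous.integrableOn_Ioo (by fun_prop) _ _
  rw [QE, setIntegral_ball_eq_polar, ← setIntegral_prod_mul, ← setIntegral_prod_mul,
    ← Measure.volume_eq_prod, ← integral_add]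
  · refine setIntegral_congr_fun (measurableSet_Ioo.prod measurableSet_Ioo) ?_
    rintro ⟨u, v⟩ ⟨⟨hu, -⟩, -⟩
    have hu : 0 < u := hu
    have hne : toE2 (u * cos v) (u * sin v) ≠ 0 := by
      rw [← norm_pos_iff, norm_toE2_polar hu.le]
      exact hu
    simp only
    rw [norm_gradient_sq_polar hu (hF _ hne) hpol
      (hρ.differentiable one_ne_zero u).hasDerivAt
      (hh.differentiable one_ne_zero v).hasDerivAt, hpol u hu, norm_toE2_polar hu.le,
      enneperPotential]
    field_simp
    ring
  · rw [Measure.volume_eq_prod, ← Measure.prod_restrict]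
    exact Integrable.mul_prod i1 i2
  · rw [Measure.volume_eq_prod, ← Measure.prod_restrict]
    exact Integrable.mul_prod (integrableOn_sq_div_self hρc hle) i3

/-- A smooth function vanishing exactly on `(-∞, 0]`, with derivative in `[0, 1]`, and lying within
`c` of the positive part. -/
def smoothPosPart (c s : ℝ) : ℝ := s * expNegInvGlue (s / c)

lemma contDiff_smoothPosPart (c : ℝ) {n : ℕ∞} : ContDiff ℝ n (smoothPosPart c) :=
  contDiff_id.mul (expNegInvGlue.contDiff.comp (contDiff_id.div_const c))

lemma smoothPosPart_of_nonpos {c s : ℝ} (hc : 0 < c) (hs : s ≤ 0) : smoothPosPart c s = 0 := by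
  rw [smoothPosPart, expNegInvGlue.zero_of_nonpos (div_nonpos_of_nonpos_of_nonneg hs hc.le),
    mul_zero]

lemma smoothPosPart_of_pos {c s : ℝ} (hc : 0 < c) (hs : 0 < s) :
    smoothPosPart c s = s * exp (-(c / s)) := by
  rw [smoothPosPart, expNegInvGlue, if_neg (not_le.2 (div_pos hs hc)), inv_div]

lemma smoothPosPart_pos {c s : ℝ} (hc : 0 < c) (hs : 0 < s) : 0 < smoothPosPart c s := by
  rw [smoothPosPart_of_pos hc hs]
  positivity

lemma pos_of_smoothPosPart_ne_zero {c s : ℝ} (hc : 0 < c) (h : smoothPosPart c s ≠ 0) : 0 < s := by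
  by_contra! hs
  exact h (smoothPosPart_of_nonpos hc hs)

lemma smoothPosPart_nonneg {c : ℝ} (hc : 0 < c) (s : ℝ) : 0 ≤ smoothPosPart c s := by
  rcases le_or_gt s 0 with hs | hs
  · exact (smoothPosPart_of_nonpos hc hs).ge
  · exact (smoothPosPart_pos hc hs).le

lemma smoothPosPart_le_self {c s : ℝ} (hc : 0 < c) (hs : 0 ≤ s) : smoothPosPart c s ≤ s := by
  rcases hs.eq_or_lt with rfl | hs
  · exact (smoothPosPart_of_nonpos hc le_rfl).le
  · rw [smoothPosPart_of_pos hc hs]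
    exact mul_le_of_le_one_right hs.le (exp_le_one_iff.2 (by have := div_pos hc hs; linarith))

lemma sub_le_smoothPosPart {c : ℝ} (hc : 0 < c) (s : ℝ) : s - c ≤ smoothPosPart c s := by
  rcases le_or_gt s 0 with hs | hs
  · rw [smoothPosPart_of_nonpos hc hs]
    linarith
  · rw [smoothPosPart_of_pos hc hs]
    have h : s * (c / s) = c := by field_simp
    nlinarith [add_one_le_exp (-(c / s))]

lemma deriv_smoothPosPart_of_nonpos {c s : ℝ} (hc : 0 < c) (hs : s ≤ 0) :
    deriv (smoothPosPart c) s = 0 := by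
  refine IsLocalMin.deriv_eq_zero (.of_forall fun t => ?_)
  rw [smoothPosPart_of_nonpos hc hs]
  exact smoothPosPart_nonneg hc t

lemma abs_deriv_smoothPosPart_le_one {c : ℝ} (hc : 0 < c) (s : ℝ) :
    |deriv (smoothPosPart c) s| ≤ 1 := by
  rcases le_or_gt s 0 with hs | hs
  · simp [deriv_smoothPosPart_of_nonpos hc hs]
  · have h : HasDerivAt (smoothPosPart c) ((1 + c / s) * exp (-(c / s))) s := by
      have h1 : HasDerivAt (fun t => t * exp (-(c / t)))
          (1 * exp (-(c / s)) + s * (exp (-(c / s)) * -((0 * s - c * 1) / s ^ 2))) s :=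
        (hasDerivAt_id s).mul (((hasDerivAt_const s c).div (hasDerivAt_id s) hs.ne').neg.exp)
      refine (h1.congr_of_eventuallyEq ?_).congr_deriv ?_
      · filter_upwards [lt_mem_nhds hs] with t ht using smoothPosPart_of_pos hc ht
      · field_simp
        ring
    have hx : 0 < c / s := div_pos hc hs
    rw [h.deriv, abs_of_nonneg (by positivity), exp_neg, ← div_eq_mul_inv,
      div_le_one (exp_pos _)]
    linarith [add_one_le_exp (c / s)]

lemma setIntegral_Ioo_eq_intervalIntegral {a b : ℝ} (hab : a ≤ b) (f : ℝ → ℝ) :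
    ∫ x in Set.Ioo a b, f x = ∫ x in a..b, f x := by
  rw [← integral_Ioc_eq_integral_Ioo, intervalIntegral.integral_of_le hab]

lemma setIntegral_Ioo_comp_sub_of_periodic {f : ℝ → ℝ} (hf : Function.Periodic f (2 * π))
    (α : ℝ) : ∫ v in Set.Ioo (-π) π, f (v - α) = ∫ v in Set.Ioo (-π) π, f v := by
  have hπ : -π ≤ π := by linarith [pi_pos]
  rw [setIntegral_Ioo_eq_intervalIntegral hπ, setIntegral_Ioo_eq_intervalIntegral hπ,
    intervalIntegral.integral_comp_sub_right]
  have h := hf.intervalIntegral_add_eq (-π - α) (-π)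
  rwa [show -π - α + 2 * π = π - α by ring, show -π + 2 * π = π by ring] at h

/-- A smooth approximation of the positive part of `cos v - cos (π / 6)`. -/
def bumpProfile (v : ℝ) : ℝ := smoothPosPart (1 / 200) (cos v - √3 / 2)

lemma contDiff_bumpProfile {n : ℕ∞} : ContDiff ℝ n bumpProfile :=
  (contDiff_smoothPosPart _).comp (contDiff_cos.sub contDiff_const)

lemma bumpProfile_periodic : Function.Periodic bumpProfile (2 * π) := fun v => by
  simp [bumpProfile]

lemma deriv_bumpProfile (v : ℝ) : deriv bumpProfile v =
    deriv (smoothPosPart (1 / 200)) (cos v - √3 / 2) * -sin v := by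
  have h : HasDerivAt bumpProfile
      (deriv (smoothPosPart (1 / 200)) (cos v - √3 / 2) * -sin v) v :=
    HasDerivAt.comp v (((contDiff_smoothPosPart (n := 1) (1 / 200)).differentiable
      one_ne_zero _).hasDerivAt) ((hasDerivAt_cos v).sub_const _)
  exact h.deriv

lemma deriv_bumpProfile_periodic : Function.Periodic (deriv bumpProfile) (2 * π) := fun v => by
  simp [deriv_bumpProfile]

lemma cos_le_sqrt_three_div_two {s : ℝ} (h1 : π / 6 ≤ |s|) (h2 : |s| ≤ 11 * π / 6) :
    cos s ≤ √3 / 2 := by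
  rw [← cos_pi_div_six, ← cos_abs s]
  rcases le_total |s| π with h | h
  · exact cos_le_cos_of_nonneg_of_le_pi (by positivity) h h1
  · rw [← cos_two_pi_sub |s|]
    exact cos_le_cos_of_nonneg_of_le_pi (by positivity) (by linarith) (by linarith)

lemma bumpProfile_eq_zero {s : ℝ} (h1 : π / 6 ≤ |s|) (h2 : |s| ≤ 11 * π / 6) :
    bumpProfile s = 0 :=
  smoothPosPart_of_nonpos (by norm_num) (by linarith [cos_le_sqrt_three_div_two h1 h2])

lemma lt_cos_of_bumpProfile_ne_zero {v : ℝ} (h : bumpProfile v ≠ 0) : √3 / 2 < cos v := by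
  have := pos_of_smoothPosPart_ne_zero (by norm_num) h
  linarith

lemma lt_cos_of_deriv_bumpProfile_ne_zero {v : ℝ} (h : deriv bumpProfile v ≠ 0) :
    √3 / 2 < cos v := by
  by_contra! hv
  apply h
  rw [deriv_bumpProfile, deriv_smoothPosPart_of_nonpos (by norm_num) (by linarith), zero_mul]

lemma le_integral_bumpProfile_sq :
    5 * π / 12 - 3 * √3 / 4 - (1 - √3 * π / 6) / 100 ≤
      ∫ v in Set.Ioo (-π) π, bumpProfile v ^ 2 := by
  have hπ := pi_pos
  have h3 : √3 ^ 2 = 3 := sq_sqrt (by norm_num)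
  have hc : Continuous bumpProfile := (contDiff_bumpProfile (n := 0)).continuous
  calc 5 * π / 12 - 3 * √3 / 4 - (1 - √3 * π / 6) / 100
      = ∫ v in (-(π / 6))..(π / 6),
          (cos v ^ 2 - (√3 + 1 / 100) * cos v + (3 / 4 + √3 / 200)) := by
        rw [intervalIntegral.integral_add (Continuous.intervalIntegrable (by fun_prop) _ _)
          (Continuous.intervalIntegrable (by fun_prop) _ _),
          intervalIntegral.integral_sub (Continuous.intervalIntegrable (by fun_prop) _ _)
          (Continuous.intervalIntegrable (by fun_prop) _ _),
          intervalIntegral.integral_const_mul, intervalIntegral.integral_const, integral_cos_sq,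
          integral_cos, cos_neg, sin_neg, cos_pi_div_six, sin_pi_div_six, smul_eq_mul]
        ring
    _ = ∫ v in Set.Ioo (-(π / 6)) (π / 6),
          (cos v ^ 2 - (√3 + 1 / 100) * cos v + (3 / 4 + √3 / 200)) :=
        (setIntegral_Ioo_eq_intervalIntegral (by linarith) _).symm
    _ ≤ ∫ v in Set.Ioo (-(π / 6)) (π / 6), bumpProfile v ^ 2 := by
        refine setIntegral_mono_on (Continuous.integrableOn_Ioo (by fun_prop) _ _)
          (Continuous.integrableOn_Ioo (by fun_prop) _ _) measurableSet_Ioo fun v hv => ?_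
        have h1 : √3 / 2 ≤ cos v := by
          rw [← cos_pi_div_six, ← cos_abs v]
          exact cos_le_cos_of_nonneg_of_le_pi (abs_nonneg _) (by linarith) (abs_lt.2 hv).le
        have h2 := sub_le_smoothPosPart (c := 1 / 200) (by norm_num) (cos v - √3 / 2)
        have h4 := smoothPosPart_nonneg (c := 1 / 200) (by norm_num) (cos v - √3 / 2)
        change _ ≤ smoothPosPart (1 / 200) (cos v - √3 / 2) ^ 2
        rcases le_total (1 / 200) (cos v - √3 / 2) with h | h
        · nlinarith
        · nlinarith
    _ ≤ ∫ v in Set.Ioo (-π) π, bumpProfile v ^ 2 :=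
        setIntegral_mono_set (Continuous.integrableOn_Ioo (by fun_prop) _ _)
          (.of_forall fun v => sq_nonneg _)
          (Set.Ioo_subset_Ioo (by linarith) (by linarith)).eventuallyLE

lemma integral_deriv_bumpProfile_sq_le :
    ∫ v in Set.Ioo (-π) π, deriv bumpProfile v ^ 2 ≤ π / 6 - √3 / 4 := by
  have hπ := pi_pos
  have hc : Continuous (deriv bumpProfile) :=
    (contDiff_bumpProfile (n := 1)).continuous_deriv_one
  rw [setIntegral_eq_of_subset_of_forall_sdiff_eq_zero measurableSet_Ioo
    (Set.Ioo_subset_Ioo (by linarith) (by linarith) : Set.Ioo (-(π / 6)) (π / 6) ⊆ _)]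
  · calc ∫ v in Set.Ioo (-(π / 6)) (π / 6), deriv bumpProfile v ^ 2
        ≤ ∫ v in Set.Ioo (-(π / 6)) (π / 6), sin v ^ 2 := by
          refine setIntegral_mono (Continuous.integrableOn_Ioo (by fun_prop) _ _)
            (Continuous.integrableOn_Ioo (by fun_prop) _ _) fun v => ?_
          simp only
          rw [deriv_bumpProfile, mul_pow, neg_sq, ← sq_abs (deriv _ _)]
          have := abs_deriv_smoothPosPart_le_one (c := 1 / 200) (by norm_num) (cos v - √3 / 2)
          exact mul_le_of_le_one_left (sq_nonneg _) (pow_le_one₀ (abs_nonneg _) this)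
      _ = π / 6 - √3 / 4 := by
          rw [setIntegral_Ioo_eq_intervalIntegral (by linarith), integral_sin_sq, cos_neg,
            sin_neg, cos_pi_div_six, sin_pi_div_six]
          ring
  · rintro v ⟨hv, hn⟩
    by_contra h
    have h1 := lt_cos_of_deriv_bumpProfile_ne_zero (fun h0 => h (by rw [h0]; norm_num))
    refine (cos_le_sqrt_three_div_two (s := v) ?_ ?_).not_gt h1
    · by_contra! h2
      exact hn (abs_lt.1 h2)
    · have := abs_lt.2 hv
      linarith

lemma integral_bumpProfile_sq_pos : 0 < ∫ v in Set.Ioo (-π) π, bumpProfile v ^ 2 := by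
  have h3 : √3 < 1.73206 := by rw [sqrt_lt' (by norm_num)]; norm_num
  have h3' : 1.73205 < √3 := by rw [lt_sqrt (by norm_num)]; norm_num
  have h := le_integral_bumpProfile_sq
  nlinarith [pi_gt_d4, pi_lt_d4]

lemma integral_deriv_bumpProfile_sq_le_mul :
    ∫ v in Set.Ioo (-π) π, deriv bumpProfile v ^ 2 ≤
      10.5 * ∫ v in Set.Ioo (-π) π, bumpProfile v ^ 2 := by
  have h3 : √3 < 1.73206 := by rw [sqrt_lt' (by norm_num)]; norm_num
  have h3' : 1.73205 < √3 := by rw [lt_sqrt (by norm_num)]; norm_num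
  have h := le_integral_bumpProfile_sq
  have h' := integral_deriv_bumpProfile_sq_le
  nlinarith [pi_gt_d4, pi_lt_d4]

lemma hasDerivAt_neg_inv_one_add_pow_ten (u : ℝ) :
    HasDerivAt (fun u : ℝ => -(1 + u ^ 10)⁻¹) (10 * u ^ 9 / (1 + u ^ 10) ^ 2) u := by
  have hne : 1 + u ^ 10 ≠ 0 := by positivity
  have h := ((hasDerivAt_pow 10 u).const_add 1).inv hne |>.neg
  refine h.congr_deriv ?_
  norm_num
  ring

lemma le_integral_enneperPotential {ρ : ℝ → ℝ} (hρ : Continuous ρ)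
    (hge : ∀ u, 0 < u → u - 1 / 50 ≤ ρ u) :
    9 ≤ ∫ u in Set.Ioo 0 1.165, u * (enneperPotential 5 u * ρ u ^ 2) := by
  have hW := continuous_enneperPotential 5
  have hder : Continuous fun u : ℝ => 10 * u ^ 9 / (1 + u ^ 10) ^ 2 :=
    Continuous.div (by fun_prop) (by fun_prop) fun u => by positivity
  calc (9 : ℝ) ≤ (20 * 0.83 ^ 2) * ∫ u in (0.85 : ℝ)..1.165, 10 * u ^ 9 / (1 + u ^ 10) ^ 2 := by
        rw [intervalIntegral.integral_eq_sub_of_hasDerivAt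
          (fun u _ => hasDerivAt_neg_inv_one_add_pow_ten u) (hder.intervalIntegrable _ _)]
        norm_num
    _ = ∫ u in Set.Ioo (0.85 : ℝ) 1.165, (20 * 0.83 ^ 2) * (10 * u ^ 9 / (1 + u ^ 10) ^ 2) := by
        rw [integral_const_mul, setIntegral_Ioo_eq_intervalIntegral (by norm_num)]
    _ ≤ ∫ u in Set.Ioo (0.85 : ℝ) 1.165, u * (enneperPotential 5 u * ρ u ^ 2) := by
        refine setIntegral_mono_on (Continuous.integrableOn_Ioo (by fun_prop) _ _)
          (Continuous.integrableOn_Ioo (by fun_prop) _ _) measurableSet_Ioo fun u hu => ?_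
        have hu0 : 0 < u := by linarith [hu.1]
        have h1 : 0.83 ≤ ρ u := by linarith [hu.1, hge u hu0]
        have h2 : u * (enneperPotential 5 u * ρ u ^ 2) =
            20 * ρ u ^ 2 * (10 * u ^ 9 / (1 + u ^ 10) ^ 2) := by
          simp only [enneperPotential]
          norm_num
          ring
        rw [h2]
        gcongr
    _ ≤ ∫ u in Set.Ioo 0 1.165, u * (enneperPotential 5 u * ρ u ^ 2) := by
        refine setIntegral_mono_set (Continuous.integrableOn_Ioo (by fun_prop) _ _) ?_
          (Set.Ioo_subset_Ioo (by norm_num) le_rfl).eventuallyLE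
        refine (ae_restrict_iff' measurableSet_Ioo).2 (.of_forall fun u hu => ?_)
        have hu : 0 < u := hu.1
        simp only [enneperPotential, Pi.zero_apply]
        positivity

lemma setIntegral_Ioo_id {R : ℝ} (hR : 0 ≤ R) : ∫ u in Set.Ioo 0 R, u = R ^ 2 / 2 := by
  rw [setIntegral_Ioo_eq_intervalIntegral hR, integral_id]
  ring

lemma radial_integral_le {ρ : ℝ → ℝ} (hρ : ContDiff ℝ 1 ρ) (hd : ∀ u, |deriv ρ u| ≤ 1)
    (hge : ∀ u, 0 < u → u - 1 / 50 ≤ ρ u) :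
    ∫ u in Set.Ioo 0 1.165, u * (deriv ρ u ^ 2 - enneperPotential 5 u * ρ u ^ 2) ≤
      1.165 ^ 2 / 2 - 9 := by
  have hρ' := hρ.continuous_deriv_one
  have hρc := hρ.continuous
  have hW := continuous_enneperPotential 5
  simp_rw [mul_sub]
  rw [integral_sub (Continuous.integrableOn_Ioo (by fun_prop) _ _)
    (Continuous.integrableOn_Ioo (by fun_prop) _ _),
    ← setIntegral_Ioo_id (by norm_num : (0 : ℝ) ≤ 1.165)]
  refine sub_le_sub (setIntegral_mono_on (Continuous.integrableOn_Ioo (by fun_prop) _ _)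
    (Continuous.integrableOn_Ioo (by fun_prop) _ _) measurableSet_Ioo fun u hu => ?_)
    (le_integral_enneperPotential hρc hge)
  rw [← sq_abs]
  exact mul_le_of_le_one_right hu.1.le (pow_le_one₀ (abs_nonneg _) (hd u))

lemma integral_sq_div_self_le {ρ : ℝ → ℝ} {R : ℝ} (hR : 0 ≤ R) (hρ : Continuous ρ)
    (hle : ∀ u, 0 < u → |ρ u| ≤ u) : ∫ u in Set.Ioo 0 R, ρ u ^ 2 / u ≤ R ^ 2 / 2 := by
  rw [← setIntegral_Ioo_id hR]
  refine setIntegral_mono_on (integrableOn_sq_div_self hρ hle)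
    (Continuous.integrableOn_Ioo (by fun_prop) _ _) measurableSet_Ioo fun u hu => ?_
  have hu : 0 < u := hu.1
  rw [div_le_iff₀ hu, ← sq_abs]
  nlinarith [hle u hu, abs_nonneg (ρ u)]

/-- The function `ρ(u) h(v - α)` in polar coordinates `(u, v)`, where `h = bumpProfile`. -/
def sectorFun (ρ : ℝ → ℝ) (α : ℝ) (w : E2) : ℝ :=
  ρ ‖w‖ * smoothPosPart (1 / 200) ((w 0 * cos α + w 1 * sin α) / ‖w‖ - √3 / 2)

lemma sectorFun_polar (ρ : ℝ → ℝ) (α : ℝ) {u : ℝ} (hu : 0 < u) (v : ℝ) :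
    sectorFun ρ α (toE2 (u * cos v) (u * sin v)) = ρ u * bumpProfile (v - α) := by
  rw [sectorFun, norm_toE2_polar hu.le, toE2_zero, toE2_one, bumpProfile, cos_sub]
  congr 3
  field_simp

lemma contDiffAt_sectorFun {ρ : ℝ → ℝ} {n : ℕ∞} (hρ : ContDiff ℝ n ρ) (α : ℝ) {w : E2}
    (hw : w ≠ 0) : ContDiffAt ℝ n (sectorFun ρ α) w := by
  have hn : ContDiffAt ℝ n (fun w : E2 => ‖w‖) w := contDiffAt_norm ℝ hw
  have hi (i : Fin 2) : ContDiffAt ℝ n (fun w : E2 => w i) w :=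
    (EuclideanSpace.proj i : E2 →L[ℝ] ℝ).contDiff.contDiffAt
  refine (hρ.contDiffAt.comp w hn).mul ((contDiff_smoothPosPart _).contDiffAt.comp w ?_)
  exact ((((hi 0).mul contDiffAt_const).add ((hi 1).mul contDiffAt_const)).div hn
    (norm_ne_zero_iff.2 hw)).sub contDiffAt_const

lemma contDiff_sectorFun {ρ : ℝ → ℝ} {n : ℕ∞} (hρ : ContDiff ℝ n ρ) (α : ℝ) {δ : ℝ} (hδ : 0 < δ)
    (h0 : ∀ u < δ, ρ u = 0) : ContDiff ℝ n (sectorFun ρ α) := by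
  refine contDiff_iff_contDiffAt.2 fun w => ?_
  rcases eq_or_ne w 0 with rfl | hw
  · refine (contDiffAt_const (c := (0 : ℝ))).congr_of_eventuallyEq ?_
    filter_upwards [Metric.ball_mem_nhds (0 : E2) hδ] with w hw
    rw [sectorFun, h0 _ (by simpa using hw), zero_mul]
  · exact contDiffAt_sectorFun hρ α hw

lemma memFE_of_contDiff {φ : E2 → ℝ} (hφ : ContDiff ℝ (⊤ : ℕ∞) φ) (R : ℝ) : memFE R φ := by
  refine ⟨hφ.contDiffOn, fun i _ => ?_⟩
  have hc : Continuous (iteratedFDeriv ℝ i φ) :=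
    hφ.continuous_iteratedFDeriv (by exact_mod_cast le_top)
  obtain ⟨C, hC⟩ := (isCompact_closedBall (0 : E2) R).exists_bound_of_continuousOn hc.continuousOn
  refine ⟨C, fun w hw => ?_⟩
  rw [iteratedFDerivWithin_of_isOpen i Metric.isOpen_ball hw]
  exact hC w (Metric.ball_subset_closedBall hw)

/-- The angle of the bisector of the `k`-th sector of opening `π / 3`. -/
def sectorAngle (k : Fin 6) : ℝ := (k : ℕ) * π / 3 + π / 6

lemma cos_sectorAngle_sub_le {k m : Fin 6} (hkm : k ≠ m) :
    cos (sectorAngle k - sectorAngle m) ≤ 1 / 2 := by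
  have h2 : cos (2 * (π / 3)) = -(1 / 2) := by rw [cos_two_mul, cos_pi_div_three]; norm_num
  have h3 : cos (3 * (π / 3)) = -1 := by rw [show 3 * (π / 3) = π by ring, cos_pi]
  have h4 : cos (4 * (π / 3)) = -(1 / 2) := by
    rw [show 4 * (π / 3) = π / 3 + π by ring, cos_add_pi, cos_pi_div_three]
  have h5 : cos (5 * (π / 3)) = 1 / 2 := by
    rw [show 5 * (π / 3) = 2 * π - π / 3 by ring, cos_two_pi_sub, cos_pi_div_three]
  wlog h : m < k generalizing k m
  · rw [← cos_neg, neg_sub]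
    exact this hkm.symm (lt_of_le_of_ne (not_lt.1 h) hkm)
  have hd : sectorAngle k - sectorAngle m = ((k - m : ℕ) : ℝ) * (π / 3) := by
    rw [Nat.cast_sub (Fin.lt_def.1 h).le, sectorAngle, sectorAngle]
    ring
  have hk := k.2
  have hm := Fin.lt_def.1 h
  rw [hd]
  generalize hj : (k - m : ℕ) = j
  have h1 : 1 ≤ j := by omega
  have h6 : j ≤ 5 := by omega
  interval_cases j <;> norm_num [h2, h3, h4, h5]

lemma sector_unique {k m : Fin 6} {v : ℝ} (hk : √3 / 2 < cos (v - sectorAngle k))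
    (hm : √3 / 2 < cos (v - sectorAngle m)) : k = m := by
  by_contra hkm
  have h := cos_sectorAngle_sub_le hkm
  rw [show sectorAngle k - sectorAngle m = (v - sectorAngle m) - (v - sectorAngle k) by ring,
    cos_sub] at h
  generalize v - sectorAngle k = a at *
  generalize v - sectorAngle m = b at *
  have h3 : √3 ^ 2 = 3 := sq_sqrt (by norm_num)
  have h3' : 0 ≤ √3 := sqrt_nonneg 3
  have ha := sin_sq_add_cos_sq a
  have hb := sin_sq_add_cos_sq b
  have hprod : 3 / 4 < cos b * cos a := by nlinarith
  have ha' : sin a ^ 2 < 1 / 4 := by nlinarith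
  have hb' : sin b ^ 2 < 1 / 4 := by nlinarith
  nlinarith [sq_nonneg (sin a + sin b)]

lemma sq_sum_eq_of_disjoint {ι : Type*} [Fintype ι] (c f : ι → ℝ)
    (hf : ∀ k m, f k ≠ 0 → f m ≠ 0 → k = m) :
    (∑ k, c k * f k) ^ 2 = ∑ k, c k ^ 2 * f k ^ 2 := by
  by_cases h : ∃ k, f k ≠ 0
  · obtain ⟨k, hk⟩ := h
    have h0 (m : ι) (hm : m ≠ k) : f m = 0 := by
      by_contra h
      exact hm (hf _ _ h hk)
    rw [Fintype.sum_eq_single k fun m hm => by rw [h0 m hm, mul_zero],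
      Fintype.sum_eq_single k fun m hm => by rw [h0 m hm]; ring, mul_pow]
  · push Not at h
    simp [h]

lemma integral_sq_sum_eq {f : ℝ → ℝ} (hf : Continuous f) (hper : Function.Periodic f (2 * π))
    (hsupp : ∀ v, f v ≠ 0 → √3 / 2 < cos v) (c : Fin 6 → ℝ) :
    ∫ v in Set.Ioo (-π) π, (∑ k, c k * f (v - sectorAngle k)) ^ 2 =
      (∑ k, c k ^ 2) * ∫ v in Set.Ioo (-π) π, f v ^ 2 := by
  have h (v : ℝ) : (∑ k, c k * f (v - sectorAngle k)) ^ 2 =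
      ∑ k, c k ^ 2 * f (v - sectorAngle k) ^ 2 :=
    sq_sum_eq_of_disjoint c (fun k => f (v - sectorAngle k)) fun k m hk hm =>
      sector_unique (hsupp _ hk) (hsupp _ hm)
  simp_rw [h]
  rw [integral_finsetSum _ fun k _ => Continuous.integrableOn_Ioo (by fun_prop) _ _,
    Finset.sum_mul]
  refine Finset.sum_congr rfl fun k _ => ?_
  rw [integral_const_mul, setIntegral_Ioo_comp_sub_of_periodic (f := fun v => f v ^ 2)
    fun v => by simp only [hper v]]

lemma QE_sum_sectorFun_neg {ρ : ℝ → ℝ} (hρ : ContDiff ℝ 1 ρ) (hd : ∀ u, |deriv ρ u| ≤ 1)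
    (hge : ∀ u, 0 < u → u - 1 / 50 ≤ ρ u) (hle : ∀ u, 0 < u → |ρ u| ≤ u) {c : Fin 6 → ℝ}
    (hc : c ≠ 0) : QE 5 1.165 (∑ k, c k • sectorFun ρ (sectorAngle k)) < 0 := by
  have hh : ContDiff ℝ 1 fun v => ∑ k, c k * bumpProfile (v - sectorAngle k) :=
    ContDiff.sum fun k _ => contDiff_const.mul
      ((contDiff_bumpProfile (n := 1)).comp (contDiff_id.sub contDiff_const))
  have hd' (v : ℝ) : deriv (fun v => ∑ k, c k * bumpProfile (v - sectorAngle k)) v =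
      ∑ k, c k * deriv bumpProfile (v - sectorAngle k) := by
    have hk (k : Fin 6) : HasDerivAt (fun v => c k * bumpProfile (v - sectorAngle k))
        (c k * deriv bumpProfile (v - sectorAngle k)) v :=
      (HasDerivAt.comp_sub_const v (sectorAngle k) ((contDiff_bumpProfile (n := 1)).differentiable
        one_ne_zero _).hasDerivAt).const_mul (c k)
    exact (HasDerivAt.fun_sum fun k _ => hk k).deriv
  rw [QE_eq_of_polar (ρ := ρ) (h := fun v => ∑ k, c k * bumpProfile (v - sectorAngle k))
    ?_ ?_ hρ hh hle]
  · simp_rw [hd']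
    rw [integral_sq_sum_eq (contDiff_bumpProfile (n := 0)).continuous bumpProfile_periodic
      fun v => lt_cos_of_bumpProfile_ne_zero]
    rw [integral_sq_sum_eq (contDiff_bumpProfile (n := 1)).continuous_deriv_one
      deriv_bumpProfile_periodic fun v => lt_cos_of_deriv_bumpProfile_ne_zero]
    have hX := radial_integral_le hρ hd hge
    have hY := integral_sq_div_self_le (R := 1.165) (by norm_num) hρ.continuous hle
    have hA := integral_bumpProfile_sq_pos
    have hB := integral_deriv_bumpProfile_sq_le_mul
    have hB0 : 0 ≤ ∫ v in Set.Ioo (-π) π, deriv bumpProfile v ^ 2 :=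
      integral_nonneg fun v => sq_nonneg _
    have hS : 0 < ∑ k, c k ^ 2 := by
      obtain ⟨k, hk⟩ := Function.ne_iff.1 hc
      exact Finset.sum_pos' (fun _ _ => sq_nonneg _)
        ⟨k, Finset.mem_univ k, sq_pos_of_ne_zero hk⟩
    generalize (∑ k, c k ^ 2) = S at *
    generalize (∫ v in Set.Ioo (-π) π, bumpProfile v ^ 2) = A at *
    generalize (∫ v in Set.Ioo (-π) π, deriv bumpProfile v ^ 2) = B at *
    generalize (∫ u in Set.Ioo 0 1.165,
      u * (deriv ρ u ^ 2 - enneperPotential 5 u * ρ u ^ 2)) = X at *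
    generalize (∫ u in Set.Ioo 0 1.165, ρ u ^ 2 / u) = Y at *
    have h1 : X * A ≤ (1.165 ^ 2 / 2 - 9) * A := mul_le_mul_of_nonneg_right hX hA.le
    have h2 : Y * B ≤ (1.165 ^ 2 / 2) * B := mul_le_mul_of_nonneg_right hY hB0
    have h3 : X * A + Y * B < 0 := by
      norm_num at h1 h2
      linarith
    calc X * (S * A) + Y * (S * B) = S * (X * A + Y * B) := by ring
      _ < 0 := mul_neg_of_pos_of_neg hS h3
  · intro w hw
    rw [show (∑ k, c k • sectorFun ρ (sectorAngle k)) =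
      fun w => ∑ k, c k * sectorFun ρ (sectorAngle k) w by ext w; simp]
    exact DifferentiableAt.fun_sum fun k _ => ((contDiffAt_sectorFun (n := 1) hρ
      (sectorAngle k) hw).differentiableAt one_ne_zero).const_mul _
  · intro u hu v
    simp [sectorFun_polar _ _ hu, Finset.mul_sum, mul_left_comm]

lemma linearIndependent_of_QE_sum_neg {n : ℕ} {R : ℝ} {Ψ : Fin 6 → E2 → ℝ}
    (h : ∀ c : Fin 6 → ℝ, c ≠ 0 → QE n R (∑ k, c k • Ψ k) < 0) : LinearIndependent ℝ Ψ := by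
  rw [Fintype.linearIndependent_iff]
  intro c hc
  by_contra! hne
  have h0 := h c (Function.ne_iff.2 hne)
  rw [hc] at h0
  have hz : gradient (0 : E2 → ℝ) = 0 := by
    ext1 w
    exact gradient_const w (0 : ℝ)
  simp [QE, hz] at h0

lemma six_le_indbE {n : ℕ} {R : ℝ} {Ψ : Fin 6 → E2 → ℝ} (hΨ : ∀ k, ContDiff ℝ (⊤ : ℕ∞) (Ψ k))
    (h : ∀ c : Fin 6 → ℝ, c ≠ 0 → QE n R (∑ k, c k • Ψ k) < 0) : 6 ≤ indbE n R := by
  refine le_sSup ⟨Submodule.span ℝ (Set.range Ψ),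
    FiniteDimensional.span_of_finite ℝ (Set.finite_range Ψ), fun φ hφ => ?_, fun φ hφ hne => ?_, ?_⟩
  · obtain ⟨c, rfl⟩ := (Submodule.mem_span_range_iff_exists_fun ℝ).1 hφ
    apply memFE_of_contDiff
    rw [show (∑ k, c k • Ψ k) = fun w => ∑ k, c k • Ψ k w by ext w; simp]
    exact ContDiff.sum fun k _ => (hΨ k).const_smul (c k)
  · obtain ⟨c, rfl⟩ := (Submodule.mem_span_range_iff_exists_fun ℝ).1 hφ
    refine h c ?_
    rintro rfl
    simp at hne
  · rw [finrank_span_eq_card (linearIndependent_of_QE_sum_neg h)]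
    rfl

/-- The restriction of `bumpProfile`, recentred at `π / 6`, to the sector `(0, π / 3)`. -/
def sectorBump : ℝ → ℝ := (Set.Ioo 0 (π / 3)).indicator fun v => bumpProfile (v - π / 6)

lemma sectorBump_eq {v : ℝ} (hv : |v - π / 6| ≤ 11 * π / 6) :
    sectorBump v = bumpProfile (v - π / 6) := by
  by_cases h : v ∈ Set.Ioo 0 (π / 3)
  · exact Set.indicator_of_mem h _
  · rw [sectorBump, Set.indicator_of_notMem h, bumpProfile_eq_zero _ hv]
    by_contra! h1
    have := abs_lt.1 h1
    exact h ⟨by linarith, by linarith⟩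

lemma contDiff_sectorBump {n : ℕ∞} : ContDiff ℝ n sectorBump := by
  refine contDiff_iff_contDiffAt.2 fun v => ?_
  have hπ := pi_pos
  by_cases hv : |v - π / 6| < π
  · refine ((contDiff_bumpProfile (n := n)).comp
      (contDiff_id.sub (contDiff_const (c := π / 6)))).contDiffAt.congr_of_eventuallyEq ?_
    have hc : Continuous fun v : ℝ => |v - π / 6| := by fun_prop
    filter_upwards [hc.continuousAt.eventually (gt_mem_nhds hv)] with t ht
    exact sectorBump_eq (by linarith)
  · refine (contDiffAt_const (c := (0 : ℝ))).congr_of_eventuallyEq ?_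
    have hmem : (Set.Icc 0 (π / 3))ᶜ ∈ nhds v := by
      refine isClosed_Icc.isOpen_compl.mem_nhds fun h => hv (abs_lt.2 ⟨?_, ?_⟩)
      · linarith [h.1]
      · linarith [h.2]
    filter_upwards [hmem] with t ht
    exact Set.indicator_of_notMem (fun h => ht (Set.Ioo_subset_Icc_self h)) _

lemma sectorBump_ne_zero : sectorBump ≠ 0 := by
  have hπ := pi_pos
  refine Function.ne_iff.2 ⟨π / 6, ?_⟩
  rw [sectorBump_eq (by simp; positivity), sub_self, bumpProfile, cos_zero]
  refine (smoothPosPart_pos (by norm_num) ?_).ne'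
  have : √3 < 2 := by rw [sqrt_lt' (by norm_num)]; norm_num
  linarith

lemma disjoint_support_sectorFun {ρ : ℝ → ℝ} (h0 : ρ 0 = 0) {k m : Fin 6} (hkm : k ≠ m) :
    Disjoint (Function.support (sectorFun ρ (sectorAngle k)))
      (Function.support (sectorFun ρ (sectorAngle m))) := by
  refine Set.disjoint_left.2 fun w hk hm => hkm ?_
  have hw : w ≠ 0 := by
    rintro rfl
    simp [sectorFun, h0] at hk
  obtain ⟨u, v, hu, rfl⟩ := exists_polar hw
  rw [Function.mem_support, sectorFun_polar _ _ hu] at hk hm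
  exact sector_unique (lt_cos_of_bumpProfile_ne_zero (right_ne_zero_of_mul hk))
    (lt_cos_of_bumpProfile_ne_zero (right_ne_zero_of_mul hm))

lemma six_le_indbE_five : 6 ≤ indbE 5 1.165 := by
  have hc : (0 : ℝ) < 1 / 200 := by norm_num
  have hρ {n : ℕ∞} : ContDiff ℝ n fun u => smoothPosPart (1 / 200) (u - 1 / 100) :=
    (contDiff_smoothPosPart _).comp (contDiff_id.sub contDiff_const)
  refine six_le_indbE (fun k => contDiff_sectorFun hρ (sectorAngle k)
    (by norm_num : (0 : ℝ) < 1 / 100) fun u hu => smoothPosPart_of_nonpos hc (by linarith))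
    fun c hne => QE_sum_sectorFun_neg hρ (fun u => ?_) (fun u _ => ?_) (fun u hu => ?_) hne
  · rw [deriv_comp_sub_const]
    exact abs_deriv_smoothPosPart_le_one hc _
  · linarith [sub_le_smoothPosPart hc (u - 1 / 100)]
  · rw [abs_of_nonneg (smoothPosPart_nonneg hc _)]
    rcases le_total (u - 1 / 100) 0 with h | h
    · rw [smoothPosPart_of_nonpos hc h]
      exact hu.le
    · linarith [smoothPosPart_le_self hc h]

/-- there are a radius `R ∈ (1.16, 1.17)` and a nonzero smooth bump
function `χ` supported in `(0, π/3)` such that the six rotated functions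
`φ_k(u cos v, u sin v) = u·χ(v − kπ/3)`, `k = 0, …, 5`, have pairwise disjoint supports,
each satisfies `Q⁵_R(φ_k) < 0`, and `Q⁵_R` is negative definite on their 6-dimensional
linear span; consequently `ind_b(Σ₁⁵(R)) ≥ 6`. -/
theorem enneper5_indb_ge_six :
    ∃ R : ℝ, 1.16 < R ∧ R < 1.17 ∧
    ∃ χ : ℝ → ℝ, χ ≠ 0 ∧ ContDiff ℝ (⊤ : ℕ∞) χ ∧
      Function.support χ ⊆ Set.Ioo 0 (π / 3) ∧
    ∃ Φ : Fin 6 → (E2 → ℝ),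
      (∀ k : Fin 6, ∀ u : ℝ, 0 < u → ∀ v ∈ Set.Ico 0 (2 * π),
        Φ k (toE2 (u * Real.cos v) (u * Real.sin v)) = u * χ (v - (k : ℕ) * π / 3)) ∧
      (∀ k m : Fin 6, k ≠ m →
        Disjoint (Function.support (Φ k)) (Function.support (Φ m))) ∧
      (∀ k : Fin 6, QE 5 R (Φ k) < 0) ∧
      LinearIndependent ℝ Φ ∧
      (∀ c : Fin 6 → ℝ, c ≠ 0 → QE 5 R (∑ k, c k • Φ k) < 0) ∧
      6 ≤ indbE 5 R := by
  have hneg (c : Fin 6 → ℝ) (hc : c ≠ 0) :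
      QE 5 1.165 (∑ k, c k • sectorFun (fun u => u) (sectorAngle k)) < 0 :=
    QE_sum_sectorFun_neg contDiff_id (fun u => by simp) (fun u _ => by norm_num)
      (fun u hu => (abs_of_pos hu).le) hc
  refine ⟨1.165, by norm_num, by norm_num, sectorBump, sectorBump_ne_zero, contDiff_sectorBump,
    Set.support_indicator_subset, fun k => sectorFun (fun u => u) (sectorAngle k), ?_,
    fun k m hkm => disjoint_support_sectorFun rfl hkm, fun k => ?_,
    linearIndependent_of_QE_sum_neg hneg, hneg, six_le_indbE_five⟩
  · intro k u hu v hv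
    have hk : ((k : ℕ) : ℝ) ≤ 5 := by exact_mod_cast Nat.le_of_lt_succ k.2
    have hk0 : (0 : ℝ) ≤ (k : ℕ) := Nat.cast_nonneg _
    have h1 := mul_le_mul_of_nonneg_right hk pi_pos.le
    have h2 := mul_nonneg hk0 pi_pos.le
    simp only
    rw [sectorFun_polar _ _ hu, sectorBump_eq, sectorAngle, sub_sub]
    rw [abs_le]
    constructor <;> linarith [hv.1, hv.2, pi_pos]
  · have h := hneg (Pi.single k 1) (by simp)
    rwa [Fintype.sum_eq_single k fun m hm => by rw [Pi.single_eq_of_ne hm, zero_smul],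
      Pi.single_eq_same, one_smul] at h
end
end
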